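/- arXiv:1408.2416 — 11 statements merged into one kernel-verified Lean document; each statement's English description precedes it below -/
import Mathlib

section
/- For all integers n ≥ 2 and i with ⌊n/2⌋ ≤ i ≤ n, the polynomial p₂(x) = xⁱ + ⌊n/2⌋(1−x²)(1−x)x^{i−1} + (1−x)x^{n−i+1} maps the interval [0,1] into itself, i.e., 0 ≤ p₂(x) ≤ 1 for all x ∈ [0,1]. -/
/-!
Write `k = ⌊n/2⌋` and `i = m + 1`. Since `1 - x^(m+1) = (1 - x) ∑_{j ≤ m} x^j`, the upper bound
follows from `k (1 - x²) x^m + x^(n-m) ≤ ∑_{j ≤ m} x^j`, and the right side is at least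
`1 + m x^m` (`one_sub_mul_le`). If `k ≤ m`, bound the two terms on the left by `m x^m` and `1`.
If `k = m + 1`, then `n - m ≥ m + 2`, so `x^(n-m)` is absorbed by `-k x^(m+2)`, and what
remains is at most `(m + 1) x^m ≤ 1 + m x^m`.
-/

/-- The bound `1 + m x^m ≤ 1 + x + ⋯ + x^m`, multiplied by `1 - x`. -/
lemma one_sub_mul_le (m : ℕ) (x : ℝ) (h0 : 0 ≤ x) (h1 : x ≤ 1) :
    (1 - x) * (1 + m * x ^ m) ≤ 1 - x ^ (m + 1) := by
  have hs : 1 + m * x ^ m ≤ ∑ j ∈ Finset.range (m + 1), x ^ j := by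
    rw [Finset.sum_range_succ', pow_zero, add_comm]
    have h := Finset.card_nsmul_le_sum (Finset.range m) (fun j => x ^ (j + 1)) (x ^ m)
      (fun j hj => pow_le_pow_of_le_one h0 h1 (Finset.mem_range.mp hj))
    rw [Finset.card_range, nsmul_eq_mul] at h
    linarith
  have hg := mul_neg_geom_sum x (m + 1)
  rw [← hg]
  exact mul_le_mul_of_nonneg_left hs (by linarith)

/-- For all integers `n ≥ 2` and `⌊n/2⌋ ≤ i ≤ n`, the polynomial
`p₂(x) = xⁱ + ⌊n/2⌋(1−x²)(1−x)x^(i−1) + (1−x)x^(n−i+1)` maps `[0,1]` into itself. -/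
theorem p2_maps_unit_interval_to_itself (n i : ℕ) (hn : 2 ≤ n)
    (hi₁ : n / 2 ≤ i) (hi₂ : i ≤ n) :
    ∀ x ∈ Set.Icc (0 : ℝ) 1,
      x ^ i + ((n / 2 : ℕ) : ℝ) * (1 - x ^ 2) * (1 - x) * x ^ (i - 1)
          + (1 - x) * x ^ (n - i + 1) ∈ Set.Icc (0 : ℝ) 1 := by
  rintro x ⟨h0, h1⟩
  obtain ⟨m, rfl⟩ : ∃ m, i = m + 1 := ⟨i - 1, by omega⟩
  rw [Nat.add_sub_cancel]
  have hx1 : 0 ≤ 1 - x := by linarith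
  have hx2 : 0 ≤ 1 - x ^ 2 := by nlinarith
  have hm0 : 0 ≤ x ^ m := pow_nonneg h0 m
  have hm1 : x ^ m ≤ 1 := pow_le_one₀ h0 h1
  refine ⟨by positivity, ?_⟩
  have key : ((n / 2 : ℕ) : ℝ) * (1 - x ^ 2) * x ^ m + x ^ (n - (m + 1) + 1)
      ≤ 1 + m * x ^ m := by
    rcases Nat.lt_or_ge m (n / 2) with hk | hk
    · have hkm : n / 2 = m + 1 := by omega
      have he : x ^ (n - (m + 1) + 1) ≤ x ^ (m + 2) :=
        pow_le_pow_of_le_one h0 h1 (by omega)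
      have hp : 0 ≤ (m : ℝ) * x ^ (m + 2) := by positivity
      rw [hkm]
      push_cast
      have hexp : ((m : ℝ) + 1) * (1 - x ^ 2) * x ^ m
          = m * x ^ m + x ^ m - m * x ^ (m + 2) - x ^ (m + 2) := by ring
      linarith
    · have hkm : ((n / 2 : ℕ) : ℝ) ≤ m := by exact_mod_cast hk
      have he : x ^ (n - (m + 1) + 1) ≤ 1 := pow_le_one₀ h0 h1
      have hb : ((n / 2 : ℕ) : ℝ) * (1 - x ^ 2) ≤ m := by
        have hc : (0 : ℝ) ≤ ((n / 2 : ℕ) : ℝ) := Nat.cast_nonneg _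
        nlinarith [mul_nonneg hc (sq_nonneg x)]
      linarith [mul_le_mul_of_nonneg_right hb hm0]
  have hl := one_sub_mul_le m x h0 h1
  have hk := mul_le_mul_of_nonneg_left key hx1
  linarith
end

section
/- Let Φ : ℝ × X → X be a continuous flow on a Hausdorff topological space X and let a : ℝ × X → ℝ be a continuous additive cocycle over Φ. Then for every compact Φ-invariant set K ⊆ X, the limit lim_{t→∞} inf_{x∈K} (1/t)·a(t,x) exists and inf_{x∈K} limsup_{t→∞} (1/t)·a(t,x) = lim_{t→∞} inf_{x∈K} (1/t)·a(t,x). -/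
/-!
Write `L` for the infimum over `K` of the upper growth rates `limsup a(t,x)/t`.

If `γ > L`, some point of `K` has upper growth rate below `γ`, so the infimum of `a(t,·)/t` is
eventually below `γ`. If `γ < L`, every `x ∈ K` admits a time `s ≥ 1` with `a(s,x) > γ s`; since
this condition is open in `x`, compactness of `K` bounds these times by a common `T`
(`exists_uniform_time`). Concatenating such times along an orbit, which stays in `K`, gives
`a(t,x) ≥ γ t - D` with `D` independent of `x` and `t` (`cocycle_lower_bound`), so the infimum of
`a(t,·)/t` is eventually above any number smaller than `γ`. The same concatenation bound, applied
to `a` and `-a` with `T = 1`, shows that `a(t,x)/t` is bounded for `t ≥ 1`, so all the infima and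
upper limits involved are genuine.
-/

open Filter

/-- If from each point of `K` the cocycle grows at rate at least `γ` over some time in `[1, T]`,
then it grows at rate at least `γ` over all times, up to an additive constant: follow the orbit
along consecutive good times until less than `T` is left. -/
lemma cocycle_lower_bound {X : Type*} (Φ : ℝ × X → X) (a : ℝ × X → ℝ)
    (hacoc : ∀ t s : ℝ, ∀ x : X, a (t + s, x) = a (t, x) + a (s, Φ (t, x)))
    (K : Set X) (hKinv : ∀ t : ℝ, ∀ x ∈ K, Φ (t, x) ∈ K) (γ T C : ℝ)
    (hC : ∀ t ∈ Set.Icc (0 : ℝ) T, ∀ x ∈ K, -C ≤ a (t, x))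
    (hs : ∀ x ∈ K, ∃ s ∈ Set.Icc (1 : ℝ) T, γ * s ≤ a (s, x)) :
    ∀ t : ℝ, 0 ≤ t → ∀ x ∈ K, γ * t - (C + |γ| * T) ≤ a (t, x) := by
  have key : ∀ n : ℕ, ∀ t : ℝ, 0 ≤ t → t ≤ n → ∀ x ∈ K,
      γ * t - (C + |γ| * T) ≤ a (t, x) := by
    have short : ∀ t : ℝ, 0 ≤ t → t ≤ T → ∀ x ∈ K, γ * t - (C + |γ| * T) ≤ a (t, x) := by
      intro t h0 hT x hx
      have h1 := hC t ⟨h0, hT⟩ x hx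
      have h2 : γ * t ≤ |γ| * T :=
        mul_le_mul (le_abs_self γ) hT h0 (abs_nonneg γ)
      linarith
    intro n
    induction n with
    | zero =>
      intro t h0 hn x hx
      obtain ⟨s, ⟨hs1, hsT⟩, -⟩ := hs x hx
      refine short t h0 ?_ x hx
      push_cast at hn
      linarith
    | succ n ih =>
      intro t h0 hn x hx
      rcases le_or_gt t T with hT | hT
      · exact short t h0 hT x hx
      obtain ⟨s, ⟨hs1, hsT⟩, hsa⟩ := hs x hx
      push_cast at hn
      have h1 := ih (t - s) (by linarith) (by linarith) (Φ (s, x)) (hKinv s x hx)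
      have h2 := hacoc s (t - s) x
      rw [add_sub_cancel] at h2
      rw [h2]
      linarith
  intro t h0
  obtain ⟨n, hn⟩ := exists_nat_ge t
  exact key n t h0 hn

/-- A continuous function on `ℝ × X` is bounded on `[0, T] × K`. -/
lemma exists_abs_bound {X : Type*} [TopologicalSpace X] (a : ℝ × X → ℝ) (hacont : Continuous a)
    (K : Set X) (hK : IsCompact K) (T : ℝ) :
    ∃ C : ℝ, ∀ t ∈ Set.Icc (0 : ℝ) T, ∀ x ∈ K, |a (t, x)| ≤ C := by
  obtain ⟨C, hC⟩ := ((isCompact_Icc (a := (0 : ℝ)) (b := T)).prod hK).exists_bound_of_continuousOn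
    hacont.continuousOn
  exact ⟨C, fun t ht x hx => hC (t, x) ⟨ht, hx⟩⟩

/-- The good times can be chosen bounded, since being good for a given time is an open condition
on the point. -/
lemma exists_uniform_time {X : Type*} [TopologicalSpace X] (a : ℝ × X → ℝ)
    (hacont : Continuous a) (K : Set X) (hK : IsCompact K) (γ : ℝ)
    (h : ∀ x ∈ K, ∃ s : ℝ, 1 ≤ s ∧ γ * s < a (s, x)) :
    ∃ T : ℝ, ∀ x ∈ K, ∃ s ∈ Set.Icc (1 : ℝ) T, γ * s ≤ a (s, x) := by
  obtain ⟨T, hT⟩ := hK.elim_directed_cover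
    (fun T : ℝ => ⋃ s ∈ Set.Icc (1 : ℝ) T, {x : X | γ * s < a (s, x)})
    (fun T => isOpen_biUnion fun s _ =>
      isOpen_lt continuous_const (hacont.comp (by fun_prop : Continuous fun x : X => (s, x))))
    (fun x hx => by
      obtain ⟨s, hs1, hs⟩ := h x hx
      exact Set.mem_iUnion.2 ⟨s, Set.mem_biUnion (Set.mem_Icc.2 ⟨hs1, le_rfl⟩) hs⟩)
    (Monotone.directed_le fun T T' hTT' =>
      Set.biUnion_subset_biUnion_left (Set.Icc_subset_Icc_right hTT'))
  refine ⟨T, fun x hx => ?_⟩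
  obtain ⟨s, hs, hsx⟩ := Set.mem_iUnion₂.1 (hT hx)
  exact ⟨s, hs, le_of_lt hsx⟩

/-- The cocycle grows at most linearly, uniformly on `K`. -/
lemma exists_rate_bound {X : Type*} [TopologicalSpace X] (Φ : ℝ × X → X) (a : ℝ × X → ℝ)
    (hacont : Continuous a)
    (hacoc : ∀ t s : ℝ, ∀ x : X, a (t + s, x) = a (t, x) + a (s, Φ (t, x)))
    (K : Set X) (hK : IsCompact K) (hKinv : ∀ t : ℝ, ∀ x ∈ K, Φ (t, x) ∈ K) :
    ∃ B : ℝ, ∀ t : ℝ, 1 ≤ t → ∀ x ∈ K, -B ≤ a (t, x) / t ∧ a (t, x) / t ≤ B := by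
  obtain ⟨C, hC⟩ := exists_abs_bound a hacont K hK 1
  have one_mem : (1 : ℝ) ∈ Set.Icc (0 : ℝ) 1 := ⟨zero_le_one, le_rfl⟩
  have lo := cocycle_lower_bound Φ a hacoc K hKinv (-C) 1 C
    (fun t ht x hx => (abs_le.1 (hC t ht x hx)).1)
    (fun x hx => ⟨1, ⟨le_rfl, le_rfl⟩, by linarith [(abs_le.1 (hC 1 one_mem x hx)).1]⟩)
  have hi := cocycle_lower_bound Φ (fun p => -a p)
    (fun t s x => by simp only [hacoc t s x]; ring) K hKinv (-C) 1 C
    (fun t ht x hx => neg_le_neg (abs_le.1 (hC t ht x hx)).2)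
    (fun x hx => ⟨1, ⟨le_rfl, le_rfl⟩, by
      linarith [(abs_le.1 (hC 1 one_mem x hx)).2]⟩)
  refine ⟨C + (C + |-C| * 1), fun t ht x hx => ?_⟩
  have ht0 : 0 < t := by linarith
  have h1 := lo t ht0.le x hx
  have h2 := hi t ht0.le x hx
  have hC0 : 0 ≤ C := (abs_nonneg _).trans (hC 1 one_mem x hx)
  have h3 : (C + |-C| * 1) ≤ (C + |-C| * 1) * t :=
    le_mul_of_one_le_right (by positivity) ht
  rw [le_div_iff₀ ht0, div_le_iff₀ ht0]
  constructor <;> linarith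

/-- Let `Φ` be a continuous flow on a Hausdorff space `X` and `a` a continuous
additive cocycle over `Φ`. For every compact `Φ`-invariant set `K ⊆ X`, the limit
`lim_{t→∞} inf_{x∈K} (1/t)·a(t,x)` exists and equals
`inf_{x∈K} limsup_{t→∞} (1/t)·a(t,x)`. -/
theorem inf_limsup_eq_lim_inf_of_additive_cocycle
    {X : Type*} [TopologicalSpace X] [T2Space X]
    (Φ : ℝ × X → X) (hΦcont : Continuous Φ)
    (hΦzero : ∀ x : X, Φ (0, x) = x)
    (hΦadd : ∀ t s : ℝ, ∀ x : X, Φ (t + s, x) = Φ (t, Φ (s, x)))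
    (a : ℝ × X → ℝ) (hacont : Continuous a)
    (hacoc : ∀ t s : ℝ, ∀ x : X, a (t + s, x) = a (t, x) + a (s, Φ (t, x)))
    (K : Set X) (hK : IsCompact K) (hKinv : ∀ t : ℝ, ∀ x ∈ K, Φ (t, x) ∈ K) :
    Tendsto (fun t : ℝ => ⨅ x : K, a (t, (x : X)) / t) atTop
      (nhds (⨅ x : K, limsup (fun t : ℝ => a (t, (x : X)) / t) atTop)) := by
  rcases isEmpty_or_nonempty K with hE | hE
  · -- Both infima are over the empty set and have the value `0`.
    simp only [Real.iInf_of_isEmpty]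
    exact tendsto_const_nhds
  obtain ⟨B, hB⟩ := exists_rate_bound Φ a hacont hacoc K hK hKinv
  have bdd_le : ∀ x : K, IsBoundedUnder (· ≤ ·) atTop (fun t : ℝ => a (t, (x : X)) / t) :=
    fun x => isBoundedUnder_of_eventually_le (a := B) <| by
      filter_upwards [eventually_ge_atTop 1] with t ht using (hB t ht x x.2).2
  have bdd_ge : ∀ x : K, IsBoundedUnder (· ≥ ·) atTop (fun t : ℝ => a (t, (x : X)) / t) :=
    fun x => isBoundedUnder_of_eventually_ge (a := -B) <| by
      filter_upwards [eventually_ge_atTop 1] with t ht using (hB t ht x x.2).1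
  have bdd_limsup :
      BddBelow (Set.range fun x : K => limsup (fun t : ℝ => a (t, (x : X)) / t) atTop) := by
    refine ⟨-B, ?_⟩
    rintro _ ⟨x, rfl⟩
    refine le_limsup_of_frequently_le (Eventually.frequently ?_) (bdd_le x)
    filter_upwards [eventually_ge_atTop 1] with t ht using (hB t ht x x.2).1
  refine tendsto_order.2 ⟨fun η hη => ?_, fun γ hγ => ?_⟩
  · obtain ⟨γ, hgap, hγ⟩ := exists_between hη
    obtain ⟨T, hT⟩ := exists_uniform_time a hacont K hK γ (fun x hx => by
      have hlt := hγ.trans_le (ciInf_le bdd_limsup ⟨x, hx⟩)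
      have hfr := frequently_lt_of_lt_limsup (bdd_ge ⟨x, hx⟩).isCoboundedUnder_le hlt
      obtain ⟨s, hs, hs1⟩ := (hfr.and_eventually (eventually_ge_atTop 1)).exists
      exact ⟨s, hs1, (lt_div_iff₀ (by linarith)).1 hs⟩)
    obtain ⟨C, hC⟩ := exists_abs_bound a hacont K hK T
    have hlow := cocycle_lower_bound Φ a hacoc K hKinv γ T C
      (fun t ht x hx => (abs_le.1 (hC t ht x hx)).1) hT
    obtain ⟨δ, hδ, hδγ⟩ := exists_between hgap
    -- For `t ≥ D / (γ - δ)` the additive error `D` costs at most `γ - δ` in the rate.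
    filter_upwards [eventually_ge_atTop 1, eventually_ge_atTop ((C + |γ| * T) / (γ - δ))]
      with t ht1 ht
    refine hδ.trans_le (le_ciInf fun x => ?_)
    have ht0 : 0 < t := by linarith
    rw [le_div_iff₀ ht0]
    rw [div_le_iff₀ (by linarith)] at ht
    have := hlow t ht0.le x x.2
    linarith
  · obtain ⟨x, hx⟩ := exists_lt_of_ciInf_lt hγ
    filter_upwards [eventually_lt_of_limsup_lt hx (bdd_le x), eventually_ge_atTop 1] with t ht ht1
    refine (ciInf_le ⟨-B, ?_⟩ x).trans_lt ht
    rintro _ ⟨y, rfl⟩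
    exact (hB t ht1 y y.2).1
end

section
/- For every ε > 0 there exists δ > 0 such that every δ-chain of the shift homeomorphism s on X^ℤ is ε-shadowed by an orbit; moreover, if the δ-chain is periodic with period N ∈ ℕ, then the shadowing point η can be chosen periodic with the same period, i.e., s^N(η) = η. -/
/-!
Given a `δ`-chain `ξ`, the shadowing point is the diagonal `η i = ξ i 0`. The chain condition
makes `ξ i (n + 1)` and `ξ (i + 1) n` `δ`-close whenever `|n| < 1 / δ`
(`dist_le_of_prodShiftDist_le`). Moving along such steps from `ξ i j` to `ξ (i + j) 0 = η (i + j)`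
takes `|j|` steps, hence costs at most `|j| δ` (`dist_diag_nonneg`, `dist_diag_neg`). Only the
finitely many `j` with `|j| < 1 / ε` matter for `ε`-shadowing, so a small `δ` suffices. The diagonal
of an `N`-periodic chain is `N`-periodic.
-/

/-- The distance `D(ξ,η) = sup_{i∈ℤ} min{d(ξ_i,η_i), 1/|i|}` (with the convention
`min{a, 1/0} = a`) on the product `X^ℤ` over a compact metric space `X`. -/
noncomputable def prodShiftDist {X : Type*} [MetricSpace X] (ξ η : ℤ → X) : ℝ :=
  ⨆ i : ℤ, if i = 0 then dist (ξ i) (η i) else min (dist (ξ i) (η i)) (1 / |(i : ℝ)|)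

/-- The shift homeomorphism `s` on `X^ℤ`, `s((ξ_n)) = (ξ_{n+1})`. -/
def shiftMap {X : Type*} (ξ : ℤ → X) : ℤ → X := fun n => ξ (n + 1)

/-- Iterated shift: `s^i(ξ)_j = ξ_{j+i}` for `i ∈ ℤ`. -/
def shiftIter {X : Type*} (i : ℤ) (ξ : ℤ → X) : ℤ → X := fun n => ξ (n + i)

/-- Compactness makes the supremum defining `prodShiftDist` a genuine one, so that it controls each
coordinate whose cap `1 / |n|` exceeds the bound. -/
lemma dist_le_of_prodShiftDist_le {X : Type*} [MetricSpace X] [CompactSpace X] {ξ η : ℤ → X}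
    {δ : ℝ} (h : prodShiftDist ξ η ≤ δ) {M : ℕ} (hM : δ < 1 / ((M : ℝ) + 1)) {n : ℤ}
    (hn : |n| ≤ M) : dist (ξ n) (η n) ≤ δ := by
  have hbdd : BddAbove (Set.range fun i : ℤ =>
      if i = 0 then dist (ξ i) (η i) else min (dist (ξ i) (η i)) (1 / |(i : ℝ)|)) := by
    refine ⟨Metric.diam (Set.univ : Set X), ?_⟩
    rintro _ ⟨i, rfl⟩
    have hd : dist (ξ i) (η i) ≤ Metric.diam (Set.univ : Set X) :=
      Metric.dist_le_diam_of_mem isCompact_univ.isBounded (Set.mem_univ _) (Set.mem_univ _)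
    dsimp only
    split_ifs
    · exact hd
    · exact (min_le_left _ _).trans hd
  have h1 := (le_ciSup hbdd n).trans h
  split_ifs at h1 with h0
  · exact h1
  · rcases min_le_iff.1 h1 with h2 | h2
    · exact h2
    · have hpos : (0 : ℝ) < |(n : ℝ)| := abs_pos.2 (by exact_mod_cast h0)
      have hle : |(n : ℝ)| ≤ (M : ℝ) + 1 := by
        have : |(n : ℝ)| ≤ (M : ℝ) := by exact_mod_cast hn
        linarith
      have := one_div_le_one_div_of_le hpos hle
      linarith

lemma dist_diag_nonneg {X : Type*} [MetricSpace X] {ξ : ℤ → ℤ → X} {δ : ℝ} {M : ℕ}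
    (h : ∀ i n : ℤ, |n| ≤ M → dist (ξ i (n + 1)) (ξ (i + 1) n) ≤ δ) (m : ℕ) :
    m ≤ M → ∀ i : ℤ, dist (ξ (i + m) 0) (ξ i m) ≤ m * δ := by
  induction m with
  | zero => intro _ i; simp
  | succ m ih =>
    intro hm i
    have h1 := ih (by omega) (i + 1)
    have h2 := h i m (by rw [abs_of_nonneg] <;> omega)
    have e : i + 1 + (m : ℤ) = i + ((m + 1 : ℕ) : ℤ) := by push_cast; ring
    rw [e] at h1
    rw [dist_comm] at h2
    have h3 := dist_triangle (ξ (i + ((m + 1 : ℕ) : ℤ)) 0) (ξ (i + 1) m) (ξ i (m + 1))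
    push_cast at *
    linarith

lemma dist_diag_neg {X : Type*} [MetricSpace X] {ξ : ℤ → ℤ → X} {δ : ℝ} {M : ℕ}
    (h : ∀ i n : ℤ, |n| ≤ M → dist (ξ i (n + 1)) (ξ (i + 1) n) ≤ δ) (m : ℕ) :
    m ≤ M → ∀ i : ℤ, dist (ξ (i - m) 0) (ξ i (-m)) ≤ m * δ := by
  induction m with
  | zero => intro _ i; simp
  | succ m ih =>
    intro hm i
    have h1 := ih (by omega) (i - 1)
    have h2 := h (i - 1) (-((m + 1 : ℕ) : ℤ)) (by rw [abs_neg, abs_of_nonneg] <;> omega)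
    have e : i - 1 - (m : ℤ) = i - ((m + 1 : ℕ) : ℤ) := by push_cast; ring
    have e2 : -((m + 1 : ℕ) : ℤ) + 1 = -(m : ℤ) := by push_cast; ring
    rw [e] at h1
    rw [e2, sub_add_cancel] at h2
    have h3 := dist_triangle (ξ (i - ((m + 1 : ℕ) : ℤ)) 0) (ξ (i - 1) (-(m : ℤ)))
      (ξ i (-((m + 1 : ℕ) : ℤ)))
    have e3 : (((m + 1 : ℕ) : ℝ)) * δ = m * δ + δ := by push_cast; ring
    rw [e3]
    linarith

/-- Shadowing lemma for the shift on `X^ℤ`: for every `ε > 0` there is `δ > 0` such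
that every `δ`-chain of the shift `s` is `ε`-shadowed by an orbit, and every periodic
`δ`-chain of period `N` is `ε`-shadowed by the orbit of an `N`-periodic point. -/
theorem shift_shadowing {X : Type*} [MetricSpace X] [CompactSpace X] :
    ∀ ε : ℝ, 0 < ε → ∃ δ : ℝ, 0 < δ ∧
      ∀ ξ : ℤ → (ℤ → X),
        (∀ i : ℤ, prodShiftDist (shiftMap (ξ i)) (ξ (i + 1)) ≤ δ) →
        (∃ η : ℤ → X, ∀ i : ℤ, prodShiftDist (shiftIter i η) (ξ i) ≤ ε) ∧
        ∀ N : ℕ, 0 < N → (∀ i : ℤ, ξ (i + N) = ξ i) →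
          ∃ η : ℤ → X, (∀ i : ℤ, prodShiftDist (shiftIter i η) (ξ i) ≤ ε) ∧
            shiftIter N η = η := by
  intro ε hε
  obtain ⟨M, hM⟩ := exists_nat_gt (1 / ε)
  have hM0 : (0 : ℝ) ≤ M := Nat.cast_nonneg M
  -- `δ < 1 / (M + 1)` makes all coordinates up to `M` visible to `δ`-chains, and `M * δ ≤ ε`.
  obtain ⟨δ, hδ, hδ'⟩ : ∃ δ : ℝ, 0 < δ ∧ δ < min (ε / (M + 1)) (1 / (M + 1)) :=
    exists_between (by positivity)
  obtain ⟨hδ1, hδ2⟩ := lt_min_iff.1 hδ'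
  have hMδ : (M : ℝ) * δ ≤ ε := by
    rw [lt_div_iff₀ (by positivity)] at hδ1
    nlinarith
  refine ⟨δ, hδ, fun ξ hξ => ?_⟩
  have hstep : ∀ i n : ℤ, |n| ≤ M → dist (ξ i (n + 1)) (ξ (i + 1) n) ≤ δ :=
    fun i n hn => dist_le_of_prodShiftDist_le (hξ i) hδ2 hn
  have hclose : ∀ i j : ℤ, |j| ≤ M → dist (ξ (j + i) 0) (ξ i j) ≤ ε := by
    intro i j hj
    have hmul : ∀ m : ℕ, m ≤ M → (m : ℝ) * δ ≤ ε := fun m hm =>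
      (mul_le_mul_of_nonneg_right (by exact_mod_cast hm) hδ.le).trans hMδ
    obtain ⟨m, rfl | rfl⟩ := j.eq_nat_or_neg
    · have hm : m ≤ M := by simpa using hj
      rw [add_comm]
      exact (dist_diag_nonneg hstep m hm i).trans (hmul m hm)
    · have hm : m ≤ M := by simpa using hj
      rw [neg_add_eq_sub]
      exact (dist_diag_neg hstep m hm i).trans (hmul m hm)
  have hshadow : ∀ i : ℤ, prodShiftDist (shiftIter i fun k => ξ k 0) (ξ i) ≤ ε := by
    intro i
    refine ciSup_le fun j => ?_
    by_cases hj : |j| ≤ M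
    · have := hclose i j hj
      split_ifs
      · exact this
      · exact (min_le_left _ _).trans this
    · have hj0 : j ≠ 0 := by
        rintro rfl
        simp at hj
      rw [if_neg hj0]
      refine (min_le_right _ _).trans ?_
      have hlt : (M : ℝ) < |(j : ℝ)| := by exact_mod_cast not_le.1 hj
      rw [one_div_le (by linarith) hε]
      linarith
  refine ⟨⟨_, hshadow⟩, fun N _ hN => ⟨_, hshadow, ?_⟩⟩
  funext k
  simp only [shiftIter, hN]
end

section
/- Let ε ∈ (0,1) and δ ∈ (0, ε²). If {ξ^i : i ∈ ℤ} is a δ-chain of the shift homeomorphism s on X^ℤ and η ∈ X^ℤ is defined by η_i := ξ^i_0 for all i ∈ ℤ, then D(s^i(η), ξ^i) ≤ √δ < ε for all i ∈ ℤ. -/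
/-- By compactness the terms in the supremum are bounded, so each is at most the supremum. -/
lemma term_le_prodShiftDist {X : Type*} [MetricSpace X] [CompactSpace X] (ξ η : ℤ → X) (k : ℤ) :
    (if k = 0 then dist (ξ k) (η k) else min (dist (ξ k) (η k)) (1 / |(k : ℝ)|))
      ≤ prodShiftDist ξ η := by
  refine le_ciSup (f := fun i : ℤ =>
    if i = 0 then dist (ξ i) (η i) else min (dist (ξ i) (η i)) (1 / |(i : ℝ)|)) ?_ k
  refine ⟨Metric.diam (Set.univ : Set X), ?_⟩
  rintro _ ⟨i, rfl⟩
  have h : dist (ξ i) (η i) ≤ Metric.diam (Set.univ : Set X) :=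
    Metric.dist_le_diam_of_mem isCompact_univ.isBounded (Set.mem_univ _) (Set.mem_univ _)
  dsimp only
  split_ifs
  · exact h
  · exact (min_le_left _ _).trans h

lemma dist_step_le {X : Type*} [MetricSpace X] [CompactSpace X] {δ : ℝ} {ξ : ℤ → (ℤ → X)}
    (hchain : ∀ i : ℤ, prodShiftDist (shiftMap (ξ i)) (ξ (i + 1)) ≤ δ)
    (i k : ℤ) (hk : |(k : ℝ)| * δ < 1) : dist (ξ i (k + 1)) (ξ (i + 1) k) ≤ δ := by
  have h := (term_le_prodShiftDist (shiftMap (ξ i)) (ξ (i + 1)) k).trans (hchain i)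
  split_ifs at h with h0
  · exact h
  · rcases min_le_iff.mp h with h | h
    · exact h
    · have hpos : 0 < |(k : ℝ)| := abs_pos.mpr (by exact_mod_cast h0)
      rw [div_le_iff₀ hpos] at h
      linarith

lemma dist_antidiag_pos_le {X : Type*} [MetricSpace X] [CompactSpace X] {δ : ℝ} (hδ : 0 < δ)
    {ξ : ℤ → (ℤ → X)} (hchain : ∀ i : ℤ, prodShiftDist (shiftMap (ξ i)) (ξ (i + 1)) ≤ δ)
    (n : ℕ) (hn : (n : ℝ) * δ < 1) (i : ℤ) : dist (ξ (n + i) 0) (ξ i n) ≤ n * δ := by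
  induction n generalizing i with
  | zero => simp
  | succ n ih =>
    push_cast at hn ⊢
    have hn' : (n : ℝ) * δ < 1 := by linarith
    have h1 := ih hn' (i + 1)
    have h2 := dist_step_le hchain i n (by simpa using hn')
    rw [dist_comm] at h2
    have h3 := dist_triangle (ξ (n + (i + 1)) 0) (ξ (i + 1) n) (ξ i (n + 1))
    rw [show (n : ℤ) + 1 + i = n + (i + 1) by ring]
    linarith

lemma dist_antidiag_neg_le {X : Type*} [MetricSpace X] [CompactSpace X] {δ : ℝ} (hδ : 0 < δ)
    {ξ : ℤ → (ℤ → X)} (hchain : ∀ i : ℤ, prodShiftDist (shiftMap (ξ i)) (ξ (i + 1)) ≤ δ)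
    (n : ℕ) (hn : (n : ℝ) * δ < 1) (i : ℤ) : dist (ξ (-n + i) 0) (ξ i (-n)) ≤ n * δ := by
  induction n generalizing i with
  | zero => simp
  | succ n ih =>
    push_cast at hn ⊢
    have h1 := ih (by linarith) (i - 1)
    have habs : |((-((n : ℤ) + 1) : ℤ) : ℝ)| = n + 1 := by
      push_cast
      rw [abs_neg, abs_of_nonneg (by positivity)]
    have h2 := dist_step_le hchain (i - 1) (-((n : ℤ) + 1)) (by rwa [habs])
    rw [show -((n : ℤ) + 1) + 1 = -n by ring, sub_add_cancel] at h2
    have h3 := dist_triangle (ξ (-n + (i - 1)) 0) (ξ (i - 1) (-n)) (ξ i (-((n : ℤ) + 1)))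
    rw [show -((n : ℤ) + 1) + i = -n + (i - 1) by ring]
    linarith

/-- If `ε ∈ (0,1)`, `δ ∈ (0,ε²)`, `{ξ^i}` is a `δ`-chain of the shift `s` on `X^ℤ`
and `η_i := ξ^i_0`, then `D(s^i(η), ξ^i) ≤ √δ < ε` for all `i ∈ ℤ`. -/
theorem shift_shadowing_explicit {X : Type*} [MetricSpace X] [CompactSpace X]
    (ε δ : ℝ) (hε0 : 0 < ε) (hε1 : ε < 1) (hδ0 : 0 < δ) (hδε : δ < ε ^ 2)
    (ξ : ℤ → (ℤ → X)) (hchain : ∀ i : ℤ, prodShiftDist (shiftMap (ξ i)) (ξ (i + 1)) ≤ δ)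
    (η : ℤ → X) (hη : ∀ i : ℤ, η i = ξ i 0) :
    ∀ i : ℤ, prodShiftDist (shiftIter i η) (ξ i) ≤ Real.sqrt δ ∧ Real.sqrt δ < ε := by
  have hsε : Real.sqrt δ < ε := (Real.sqrt_lt' hε0).mpr hδε
  have hs0 : 0 < Real.sqrt δ := Real.sqrt_pos.mpr hδ0
  have hsq : Real.sqrt δ * Real.sqrt δ = δ := Real.mul_self_sqrt hδ0.le
  intro i
  refine ⟨ciSup_le fun j => ?_, hsε⟩
  simp only [shiftIter, hη]
  split_ifs with hj
  · subst hj
    simp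
  · rcases le_or_gt (1 / |(j : ℝ)|) (Real.sqrt δ) with h | h
    · exact (min_le_right _ _).trans h
    · refine (min_le_left _ _).trans ?_
      have hpos : 0 < |(j : ℝ)| := abs_pos.mpr (by exact_mod_cast hj)
      rw [lt_div_iff₀ hpos] at h
      -- From `√δ |j| < 1`, multiplying by `√δ`.
      have hjδ : |(j : ℝ)| * δ ≤ Real.sqrt δ := by nlinarith
      obtain ⟨n, rfl | rfl⟩ := j.eq_nat_or_neg
      · simp only [Int.cast_natCast, Nat.abs_cast] at hjδ
        exact (dist_antidiag_pos_le hδ0 hchain n (by linarith) i).trans hjδ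
      · simp only [Int.cast_neg, Int.cast_natCast, abs_neg, Nat.abs_cast] at hjδ
        exact (dist_antidiag_neg_le hδ0 hchain n (by linarith) i).trans hjδ
end

section
/- The shift flow θ on 𝒰 has the following shadowing property: for every metric d_𝒰 on 𝒰 compatible with the weak* topology and every ε > 0 there exists δ > 0 such that for every bi-infinite sequence (u^i)_{i∈ℤ} in 𝒰 with d_𝒰(θ_1 u^i, u^{i+1}) ≤ δ for all i ∈ ℤ there exists u ∈ 𝒰 with d_𝒰(θ_i u, u^i) ≤ ε for all i ∈ ℤ. If moreover (u^i)_{i∈ℤ} is periodic with period n ∈ ℕ (u^{i+n} = u^i for all i ∈ ℤ), then u can be chosen n-periodic, i.e., θ_n u = u. -/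
/-!
Given a sequence `(u j)` of controls, let `v = shadow u` be the control equal to `θ_{-j} (u j)` on
`[j, j + 1)`. Then `θ_i v` is the control built in the same way from the sequence `j ↦ u (i + j)`
(`shiftFlow_shadow`), so it suffices to compare `shadow w` with `w 0` for sequences `w` with small
jumps; moreover `v` inherits any integer period of `u`. If `w` is a genuine orbit, then
`shadow w = w 0` (`shadow_of_orbit`). Since `w ↦ shadow w` is continuous for the product topology
(`continuous_shadow`) and the space of sequences is compact, the sequences with
`ε ≤ d(shadow w, w 0)` and all jumps at most `1 / (k + 1)` form a decreasing sequence of compact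
sets with empty intersection, so one of them is empty; this gives `δ`.

Weak* compactness of `𝒰` (`compactSpace_controlFunctions`) is derived from Hilbert space theory:
multiplication by the square integrable weight `h(t) = exp (-t²)` identifies `𝒰` with a bounded
closed convex subset of `L²(ℝ, ℝ^m)`, which is weakly compact, and division by `h` is continuous
from the weak to the weak* topology on this set.
-/

open MeasureTheory Filter

/-- The set of admissible control functions with control range `U`, viewed as a.e.
equivalence classes of measurable functions `ℝ → ℝ^m` (i.e. as a subset of
`L^∞(ℝ,ℝ^m)`). -/
def controlFunctions (m : ℕ) (U : Set (Fin m → ℝ)) :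
    Set (ℝ →ₘ[(volume : Measure ℝ)] (Fin m → ℝ)) :=
  {u | ∀ᵐ t : ℝ, u t ∈ U}

theorem shift_mem_controlFunctions {m : ℕ} {U : Set (Fin m → ℝ)} (t : ℝ)
    {u : ℝ →ₘ[(volume : Measure ℝ)] (Fin m → ℝ)} (hu : u ∈ controlFunctions m U) :
    u.compMeasurePreserving (· + t) (measurePreserving_add_right volume t)
      ∈ controlFunctions m U := by
  have h₁ := AEEqFun.coeFn_compMeasurePreserving u (measurePreserving_add_right volume t)
  have h₂ : ∀ᵐ s : ℝ, u (s + t) ∈ U :=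
    ((measurePreserving_add_right volume t).quasiMeasurePreserving.tendsto_ae).eventually hu
  filter_upwards [h₁, h₂] with s hs₁ hs₂
  rw [hs₁]; exact hs₂

/-- The shift flow `θ_t u = u(· + t)` on the set of admissible control functions. -/
noncomputable def shiftFlow {m : ℕ} {U : Set (Fin m → ℝ)} (t : ℝ)
    (u : controlFunctions m U) : controlFunctions m U :=
  ⟨u.1.compMeasurePreserving (· + t) (measurePreserving_add_right volume t),
    shift_mem_controlFunctions t u.2⟩

/-- The weak* topology on the set of admissible control functions, i.e. the topology
induced by the pairings `u ↦ ∫ ⟨u(t), x(t)⟩ dt` with integrable functions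
`x ∈ L¹(ℝ,ℝ^m)`, coming from the duality `L^∞(ℝ,ℝ^m) = L¹(ℝ,ℝ^m)*`. -/
noncomputable def weakStarTopology (m : ℕ) (U : Set (Fin m → ℝ)) :
    TopologicalSpace (controlFunctions m U) :=
  TopologicalSpace.induced
    (fun u : controlFunctions m U =>
      fun x : Lp (Fin m → ℝ) 1 (volume : Measure ℝ) =>
        ∫ t : ℝ, ∑ i, (u : ℝ →ₘ[(volume : Measure ℝ)] (Fin m → ℝ)) t i * x t i)
    Pi.topologicalSpace

namespace ShiftShadowing

open scoped Topology

attribute [local instance] weakStarTopology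

variable {m : ℕ} {U : Set (Fin m → ℝ)}

/-! ### The duality pairing -/

/-- The duality pairing `⟨u, x⟩ = ∫ u(t) · x(t) dt`, with `x` a genuine function. -/
noncomputable def pairing (u : controlFunctions m U) (x : ℝ → Fin m → ℝ) : ℝ :=
  ∫ t : ℝ, ∑ i, u.1 t i * x t i

theorem continuous_pairing {x : ℝ → Fin m → ℝ} (hx : Integrable x) :
    Continuous fun u : controlFunctions m U => pairing u x := by
  have h : Continuous fun u : controlFunctions m U =>
      (fun y : Lp (Fin m → ℝ) 1 (volume : Measure ℝ) => ∫ t : ℝ, ∑ i, u.1 t i * y t i) :=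
    continuous_induced_dom
  have h2 := (continuous_pi_iff.1 h) (hx.toL1 x)
  refine h2.congr fun u => integral_congr_ae ?_
  filter_upwards [hx.coeFn_toL1] with t ht
  rw [ht]

theorem continuous_of_pairing {Y : Type*} [TopologicalSpace Y] {f : Y → controlFunctions m U}
    (hf : ∀ x : ℝ → Fin m → ℝ, Integrable x → Continuous fun y => pairing (f y) x) :
    Continuous f := by
  refine continuous_induced_rng.2 (continuous_pi fun x => ?_)
  exact hf x (L1.integrable_coeFn x)

/-- A Hölder bound valid at almost every time; the factor `m` comes from using the sup norm. -/
theorem ae_abs_sum_le {C : ℝ} (hC : ∀ y ∈ U, ‖y‖ ≤ C) (u : controlFunctions m U)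
    (x : ℝ → Fin m → ℝ) :
    ∀ᵐ t : ℝ, ‖∑ i, u.1 t i * x t i‖ ≤ m * C * ‖x t‖ := by
  have hu : ∀ᵐ t : ℝ, u.1 t ∈ U := u.2
  filter_upwards [hu] with t ht
  have hC0 : 0 ≤ C := (norm_nonneg _).trans (hC _ ht)
  calc ‖∑ i, u.1 t i * x t i‖ ≤ ∑ i, ‖u.1 t i * x t i‖ := norm_sum_le _ _
    _ ≤ ∑ _i : Fin m, C * ‖x t‖ := by
        refine Finset.sum_le_sum fun i _ => ?_
        rw [norm_mul]
        exact mul_le_mul ((norm_le_pi_norm _ i).trans (hC _ ht)) (norm_le_pi_norm _ i)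
          (norm_nonneg _) hC0
    _ = m * C * ‖x t‖ := by simp [mul_assoc]

theorem aestronglyMeasurable_sum (u : controlFunctions m U) {x : ℝ → Fin m → ℝ}
    (hx : AEStronglyMeasurable x volume) :
    AEStronglyMeasurable (fun t => ∑ i, u.1 t i * x t i) volume := by
  have h1 : AEMeasurable (fun t => u.1 t) volume := u.1.aemeasurable
  have h2 := hx.aemeasurable
  refine AEMeasurable.aestronglyMeasurable ?_
  fun_prop

theorem integrable_sum {C : ℝ} (hC : ∀ y ∈ U, ‖y‖ ≤ C) (u : controlFunctions m U)
    {x : ℝ → Fin m → ℝ} (hx : Integrable x) :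
    Integrable (fun t => ∑ i, u.1 t i * x t i) :=
  (hx.norm.const_mul (m * C)).mono' (aestronglyMeasurable_sum u hx.1) (ae_abs_sum_le hC u x)

theorem norm_pairing_le {C : ℝ} (hC : ∀ y ∈ U, ‖y‖ ≤ C) (u : controlFunctions m U)
    {x : ℝ → Fin m → ℝ} (hx : Integrable x) :
    ‖pairing u x‖ ≤ m * C * ∫ t, ‖x t‖ := by
  rw [← integral_const_mul]
  exact norm_integral_le_of_norm_le (hx.norm.const_mul _) (ae_abs_sum_le hC u x)

theorem pairing_sub {C : ℝ} (hC : ∀ y ∈ U, ‖y‖ ≤ C) (u : controlFunctions m U)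
    {x y : ℝ → Fin m → ℝ} (hx : Integrable x) (hy : Integrable y) :
    pairing u x - pairing u y = pairing u (fun t => x t - y t) := by
  unfold pairing
  rw [← integral_sub (integrable_sum hC u hx) (integrable_sum hC u hy)]
  simp [mul_sub]

/-! ### The shift flow -/

theorem coeFn_shiftFlow (t : ℝ) (u : controlFunctions m U) :
    ∀ᵐ s : ℝ, (shiftFlow t u).1 s = u.1 (s + t) :=
  AEEqFun.coeFn_compMeasurePreserving u.1 (measurePreserving_add_right volume t)

theorem ae_add_right {p : ℝ → Prop} (h : ∀ᵐ s : ℝ, p s) (t : ℝ) : ∀ᵐ s : ℝ, p (s + t) :=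
  ((measurePreserving_add_right volume t).quasiMeasurePreserving.tendsto_ae).eventually h

theorem control_ext {u v : controlFunctions m U} (h : ∀ᵐ s : ℝ, u.1 s = v.1 s) : u = v :=
  Subtype.ext (AEEqFun.ext h)

theorem shiftFlow_shiftFlow (s t : ℝ) (u : controlFunctions m U) :
    shiftFlow s (shiftFlow t u) = shiftFlow (s + t) u := by
  refine control_ext ?_
  filter_upwards [coeFn_shiftFlow s (shiftFlow t u), coeFn_shiftFlow (s + t) u,
    ae_add_right (coeFn_shiftFlow t u) s] with r h1 h2 h3
  rw [h1, h2, h3, add_assoc]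

theorem shiftFlow_zero (u : controlFunctions m U) : shiftFlow 0 u = u := by
  refine control_ext ?_
  filter_upwards [coeFn_shiftFlow 0 u] with r h1
  rw [h1, add_zero]

theorem pairing_shiftFlow (t : ℝ) (u : controlFunctions m U) (x : ℝ → Fin m → ℝ) :
    pairing (shiftFlow t u) x = pairing u fun s => x (s + -t) := by
  unfold pairing
  rw [← integral_add_right_eq_self (fun s => ∑ i, u.1 s i * x (s + -t) i) t]
  refine integral_congr_ae ?_
  filter_upwards [coeFn_shiftFlow t u] with s hs
  simp [hs]

theorem continuous_shiftFlow (t : ℝ) :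
    Continuous (shiftFlow t : controlFunctions m U → controlFunctions m U) := by
  refine continuous_of_pairing fun x hx => ?_
  simp_rw [pairing_shiftFlow]
  exact continuous_pairing (hx.comp_add_right (-t))

/-! ### Gluing along the partition of the line into unit intervals -/

theorem measurable_glueFun (w : ℤ → controlFunctions m U) :
    Measurable fun t : ℝ => (w ⌊t⌋).1 t := by
  have h : Measurable fun p : ℤ × ℝ => (w p.1).1 p.2 :=
    measurable_from_prod_countable_right fun j => (w j).1.measurable
  exact h.comp (Int.measurable_floor.prodMk measurable_id)

/-- The control function which coincides with `w j` on `[j, j + 1)` for every integer `j`. -/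
noncomputable def glue (w : ℤ → controlFunctions m U) : controlFunctions m U :=
  ⟨AEEqFun.mk (fun t : ℝ => (w ⌊t⌋).1 t) (measurable_glueFun w).aestronglyMeasurable, by
    have h : ∀ᵐ t : ℝ, ∀ j, (w j).1 t ∈ U := ae_all_iff.2 fun j => (w j).2
    filter_upwards [h, AEEqFun.coeFn_mk (fun t : ℝ => (w ⌊t⌋).1 t)
      (measurable_glueFun w).aestronglyMeasurable] with t ht1 ht2
    rw [ht2]
    exact ht1 _⟩

theorem coeFn_glue (w : ℤ → controlFunctions m U) :
    ∀ᵐ t : ℝ, (glue w).1 t = (w ⌊t⌋).1 t :=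
  AEEqFun.coeFn_mk _ _

theorem glue_const (u : controlFunctions m U) : glue (fun _ => u) = u :=
  control_ext (coeFn_glue _)

theorem shiftFlow_glue (n : ℤ) (w : ℤ → controlFunctions m U) :
    shiftFlow (n : ℝ) (glue w) = glue fun j => shiftFlow (n : ℝ) (w (n + j)) := by
  refine control_ext ?_
  have h : ∀ᵐ s : ℝ, ∀ j, (shiftFlow (n : ℝ) (w (n + j))).1 s = (w (n + j)).1 (s + n) :=
    ae_all_iff.2 fun j => coeFn_shiftFlow _ _
  filter_upwards [coeFn_shiftFlow (n : ℝ) (glue w), ae_add_right (coeFn_glue w) n,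
    coeFn_glue fun j => shiftFlow (n : ℝ) (w (n + j)), h] with s h1 h2 h3 h4
  rw [h1, h2, h3, h4, Int.floor_add_intCast, add_comm]

/-- Gluing is continuous for the product topology: `⟨glue w, x⟩` is the sum of the pairings of
`w j` with the restriction of `x` to `[j, j + 1)`, and this series converges uniformly in `w`
because `U` is bounded. -/
theorem continuous_glue (hU : Bornology.IsBounded U) :
    Continuous (glue : (ℤ → controlFunctions m U) → controlFunctions m U) := by
  obtain ⟨C, hC⟩ := hU.exists_norm_le
  refine continuous_of_pairing fun x hx => ?_
  set A : ℤ → Set ℝ := fun j => Int.floor ⁻¹' {j} with hA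
  have hAm : ∀ j, MeasurableSet (A j) := fun j => Int.measurable_floor (measurableSet_singleton j)
  have hAd : Pairwise (Function.onFun Disjoint A) := fun i j hij =>
    Disjoint.preimage _ (by simpa using hij)
  have hAU : ⋃ j, A j = Set.univ := by
    exact Set.eq_univ_of_forall fun t => Set.mem_iUnion.2 ⟨⌊t⌋, rfl⟩
  have hxA : ∀ j, Integrable ((A j).indicator x) := fun j => hx.indicator (hAm j)
  have hsum : Summable fun j => m * C * ∫ t, ‖(A j).indicator x t‖ := by
    have h := (hasSum_integral_iUnion (μ := volume) (f := fun t => ‖x t‖) hAm hAd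
      hx.norm.integrableOn).summable
    refine (h.mul_left (m * C)).congr fun j => ?_
    rw [← integral_indicator (hAm j)]
    simp_rw [norm_indicator_eq_indicator_norm]
  have key : ∀ w : ℤ → controlFunctions m U,
      pairing (glue w) x = ∑' j, pairing (w j) ((A j).indicator x) := by
    intro w
    have h := (hasSum_integral_iUnion (μ := volume)
      (f := fun t => ∑ i, (glue w).1 t i * x t i) hAm hAd
      (integrable_sum hC (glue w) hx).integrableOn).tsum_eq
    rw [hAU, setIntegral_univ] at h
    unfold pairing
    rw [← h]
    refine tsum_congr fun j => ?_
    rw [← integral_indicator (hAm j)]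
    refine integral_congr_ae ?_
    filter_upwards [coeFn_glue w] with t ht
    by_cases htj : t ∈ A j
    · have : ⌊t⌋ = j := htj
      simp [htj, ht, this]
    · simp [htj]
  simp_rw [key]
  exact continuous_tsum (fun j => (continuous_pairing (hxA j)).comp (continuous_apply j)) hsum
    fun j w => norm_pairing_le hC (w j) (hxA j)

/-! ### Weak* compactness of the set of controls -/

/-- In a real Hilbert space, bounded closed convex sets are weakly compact. -/
theorem isCompact_toWeakSpace_image {H : Type*} [NormedAddCommGroup H] [InnerProductSpace ℝ H]
    [CompleteSpace H] {S : Set H} (hb : Bornology.IsBounded S) (hc : IsClosed S)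
    (hconv : Convex ℝ S) : IsCompact (toWeakSpace ℝ H '' S) := by
  have hcl : closure (toWeakSpace ℝ H '' S) = toWeakSpace ℝ H '' S := by
    rw [← hconv.toWeakSpace_closure ℝ, hc.closure_eq]
  rw [← hcl]
  refine NormedSpace.isCompact_closure_of_isBounded ℝ H _ ?_ ?_
  · rwa [Set.preimage_image_eq _ (toWeakSpace ℝ H).injective]
  -- Hilbert spaces are reflexive, by the Riesz representation applied twice.
  · rintro φ -
    let ψ : StrongDual ℝ H :=
      (WeakDual.toStrongDual φ).comp (innerSL ℝ : H →L[ℝ] StrongDual ℝ H)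
    refine ⟨toWeakSpace ℝ H ((InnerProductSpace.toDual ℝ H).symm ψ), ?_⟩
    refine DFunLike.ext _ _ fun f => ?_
    obtain ⟨y, rfl⟩ := (InnerProductSpace.toDual ℝ H).surjective f
    change inner ℝ y ((InnerProductSpace.toDual ℝ H).symm ψ) = _
    rw [real_inner_comm, InnerProductSpace.toDual_symm_apply]
    rfl

theorem continuous_weakSpace_inner {H : Type*} [NormedAddCommGroup H] [InnerProductSpace ℝ H]
    (g : H) : Continuous fun f : WeakSpace ℝ H => inner ℝ g ((toWeakSpace ℝ H).symm f) :=
  WeakBilin.eval_continuous (topDualPairing ℝ H).flip (innerSL ℝ g)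

/-- The weight `h(t) = exp (-t²)`: positive, continuous and square integrable. -/
noncomputable def weight (t : ℝ) : ℝ := Real.exp (-t ^ 2)

theorem weight_pos (t : ℝ) : 0 < weight t := Real.exp_pos _

theorem continuous_weight : Continuous weight := by unfold weight; fun_prop

theorem memLp_weight : MemLp weight 2 volume := by
  rw [memLp_two_iff_integrable_sq continuous_weight.aestronglyMeasurable]
  refine (integrable_exp_neg_mul_sq (b := 2) (by norm_num)).congr (ae_of_all _ fun t => ?_)
  simp only [weight, ← Real.exp_nat_mul]
  congr 1
  push_cast
  ring

/-- The Hilbert space `L²(ℝ, ℝ^m)`. -/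
abbrev L2Space (m : ℕ) : Type := Lp (EuclideanSpace ℝ (Fin m)) 2 (volume : Measure ℝ)

/-- The functions `f ∈ L²` of the form `f = h u` with `u ∈ 𝒰` and `h` the weight. -/
def weightedControls (m : ℕ) (U : Set (Fin m → ℝ)) : Set (L2Space m) :=
  {f | ∀ᵐ t : ℝ, (weight t)⁻¹ • (f t).ofLp ∈ U}

theorem convex_weightedControls (hU : Convex ℝ U) : Convex ℝ (weightedControls m U) := by
  intro f hf g hg a b ha hb hab
  have hf' : ∀ᵐ t : ℝ, (weight t)⁻¹ • (f t).ofLp ∈ U := hf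
  have hg' : ∀ᵐ t : ℝ, (weight t)⁻¹ • (g t).ofLp ∈ U := hg
  change ∀ᵐ t : ℝ, (weight t)⁻¹ • ((a • f + b • g : L2Space m) t).ofLp ∈ U
  filter_upwards [hf', hg', Lp.coeFn_add (a • f) (b • g), Lp.coeFn_smul a f,
    Lp.coeFn_smul b g] with t h1 h2 h3 h4 h5
  have h := hU h1 h2 ha hb hab
  rw [h3, Pi.add_apply, h4, h5]
  convert h using 1
  simp [smul_add, smul_comm a, smul_comm b]

theorem isClosed_weightedControls (hU : IsClosed U) : IsClosed (weightedControls m U) := by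
  refine IsSeqClosed.isClosed fun f g hf hfg => ?_
  obtain ⟨φ, -, hφ⟩ := (tendstoInMeasure_of_tendsto_Lp hfg).exists_seq_tendsto_ae
  have hf' : ∀ᵐ t : ℝ, ∀ n, (weight t)⁻¹ • (f n t).ofLp ∈ U := ae_all_iff.2 hf
  change ∀ᵐ t : ℝ, (weight t)⁻¹ • (g t).ofLp ∈ U
  filter_upwards [hf', hφ] with t h1 h2
  have h3 : Tendsto (fun n => (weight t)⁻¹ • (f (φ n) t).ofLp) atTop
      (𝓝 ((weight t)⁻¹ • (g t).ofLp)) :=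
    (((PiLp.continuous_ofLp 2 _).tendsto _).comp h2).const_smul _
  exact hU.mem_of_tendsto h3 (Eventually.of_forall fun n => h1 _)

theorem isBounded_weightedControls (hU : Bornology.IsBounded U) :
    Bornology.IsBounded (weightedControls m U) := by
  have hU' : Bornology.IsBounded (WithLp.toLp 2 '' U : Set (EuclideanSpace ℝ (Fin m))) :=
    (PiLp.lipschitzWith_toLp 2 (fun _ : Fin m => ℝ)).isBounded_image hU
  obtain ⟨C, hC⟩ := hU'.exists_norm_le
  refine isBounded_iff_forall_norm_le.2 ⟨C * ‖memLp_weight.toLp weight‖, fun f hf => ?_⟩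
  refine Lp.norm_le_mul_norm_of_ae_le_mul ?_
  have hf' : ∀ᵐ t : ℝ, (weight t)⁻¹ • (f t).ofLp ∈ U := hf
  filter_upwards [hf', memLp_weight.coeFn_toLp] with t h1 h2
  have h3 := hC _ (Set.mem_image_of_mem _ h1)
  rw [WithLp.toLp_smul, norm_smul, norm_inv, inv_mul_le_iff₀ (by simpa using (weight_pos t).ne')]
    at h3
  rw [h2, mul_comm]
  simpa using h3

theorem aestronglyMeasurable_unweight (f : L2Space m) :
    AEStronglyMeasurable (fun t => (weight t)⁻¹ • (f t).ofLp) volume := by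
  have h1 : AEStronglyMeasurable (fun t => (f t).ofLp) volume :=
    (PiLp.continuous_ofLp 2 _).comp_aestronglyMeasurable (Lp.aestronglyMeasurable f)
  have h2 : Continuous fun t => (weight t)⁻¹ :=
    continuous_weight.inv₀ fun t => (weight_pos t).ne'
  exact h2.aestronglyMeasurable.smul h1

/-- The map `f ↦ h⁻¹ f` from weighted controls back to controls. -/
noncomputable def unweight (f : weightedControls m U) : controlFunctions m U :=
  ⟨AEEqFun.mk _ (aestronglyMeasurable_unweight f.1), by
    have hf : ∀ᵐ t : ℝ, (weight t)⁻¹ • (f.1 t).ofLp ∈ U := f.2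
    filter_upwards [hf, AEEqFun.coeFn_mk _ (aestronglyMeasurable_unweight f.1)] with t h1 h2
    rwa [h2]⟩

theorem coeFn_unweight (f : weightedControls m U) :
    ∀ᵐ t : ℝ, (unweight f).1 t = (weight t)⁻¹ • (f.1 t).ofLp :=
  AEEqFun.coeFn_mk _ _

theorem unweight_surjective (hU : Bornology.IsBounded U) :
    Function.Surjective (unweight : weightedControls m U → controlFunctions m U) := by
  intro u
  have hU' : Bornology.IsBounded (WithLp.toLp 2 '' U : Set (EuclideanSpace ℝ (Fin m))) :=
    (PiLp.lipschitzWith_toLp 2 (fun _ : Fin m => ℝ)).isBounded_image hU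
  obtain ⟨C, hC⟩ := hU'.exists_norm_le
  have hu : ∀ᵐ t : ℝ, u.1 t ∈ U := u.2
  have hmem : MemLp (fun t => weight t • (WithLp.toLp 2 (u.1 t) : EuclideanSpace ℝ (Fin m)))
      2 volume := by
    refine memLp_weight.of_le_mul (c := C) ?_ ?_
    · exact continuous_weight.aestronglyMeasurable.smul
        ((PiLp.continuous_toLp 2 _).comp_aestronglyMeasurable u.1.aestronglyMeasurable)
    · filter_upwards [hu] with t ht
      rw [norm_smul, mul_comm]
      exact mul_le_mul_of_nonneg_right (hC _ (Set.mem_image_of_mem _ ht)) (norm_nonneg _)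
  have hval : ∀ᵐ t : ℝ, (weight t)⁻¹ • (hmem.toLp _ t).ofLp = u.1 t := by
    filter_upwards [hmem.coeFn_toLp] with t ht
    rw [ht]
    simp [smul_smul, inv_mul_cancel₀ (weight_pos t).ne']
  have hS : hmem.toLp _ ∈ weightedControls m U := by
    change ∀ᵐ t : ℝ, (weight t)⁻¹ • (hmem.toLp _ t).ofLp ∈ U
    filter_upwards [hu, hval] with t h1 h2
    rwa [h2]
  refine ⟨⟨hmem.toLp _, hS⟩, control_ext ?_⟩
  filter_upwards [coeFn_unweight ⟨hmem.toLp _, hS⟩, hval] with t h1 h2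
  rw [h1, h2]

/-- If `‖x‖ ≤ c h²`, then pairing `h⁻¹ f` with `x` is the `L²` inner product of `f` with
`h⁻¹ x ∈ L²`. -/
theorem exists_inner_eq_pairing {x : ℝ → Fin m → ℝ} (hx : AEStronglyMeasurable x volume) {c : ℝ}
    (hc : ∀ t, ‖x t‖ ≤ c * weight t ^ 2) :
    ∃ g : L2Space m, ∀ f : weightedControls m U, pairing (unweight f) x = inner ℝ g f.1 := by
  have hmem : MemLp (fun t => (WithLp.toLp 2 ((weight t)⁻¹ • x t) : EuclideanSpace ℝ (Fin m)))
      2 volume := by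
    have h0 : MemLp (fun t => (weight t)⁻¹ • x t) 2 volume := by
      refine memLp_weight.of_le_mul (c := c) ?_ (ae_of_all _ fun t => ?_)
      · have h2 : Continuous fun t => (weight t)⁻¹ :=
          continuous_weight.inv₀ fun t => (weight_pos t).ne'
        exact h2.aestronglyMeasurable.smul hx
      · have hw := weight_pos t
        rw [norm_smul, norm_inv, Real.norm_of_nonneg hw.le, inv_mul_le_iff₀ hw]
        calc ‖x t‖ ≤ c * weight t ^ 2 := hc t
          _ = weight t * (c * weight t) := by ring
    exact (PiLp.lipschitzWith_toLp 2 (fun _ : Fin m => ℝ)).comp_memLp (by simp) h0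
  refine ⟨hmem.toLp _, fun f => ?_⟩
  rw [L2.inner_def]
  refine integral_congr_ae ?_
  filter_upwards [hmem.coeFn_toLp, coeFn_unweight f] with t h1 h2
  rw [h1, h2, PiLp.inner_apply]
  refine Finset.sum_congr rfl fun i _ => ?_
  simp
  ring

/-- For each `x ∈ L¹`, the functional `f ↦ ⟨h⁻¹ f, x⟩` is continuous for the weak topology of `L²`.
A general `x ∈ L¹` is the `L¹`-limit of its truncations `x 1_{‖x‖ ≤ k h²}`, and the resulting
approximation of the pairing is uniform because `U` is bounded. -/
theorem continuous_pairing_unweight (hU : Bornology.IsBounded U) {x : ℝ → Fin m → ℝ}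
    (hx : Integrable x) :
    Continuous fun f : toWeakSpace ℝ (L2Space m) '' weightedControls m U =>
      pairing (unweight ⟨(toWeakSpace ℝ (L2Space m)).symm f.1, by
        obtain ⟨g, hg, hgf⟩ := f.2
        rw [← hgf]
        simpa using hg⟩) x := by
  obtain ⟨C, hC⟩ := hU.exists_norm_le
  -- A strongly measurable representative of `x` makes the truncation sets measurable.
  wlog hxm : StronglyMeasurable x generalizing x
  · have hae := hx.1.ae_eq_mk
    refine (this (hx.congr hae) hx.1.stronglyMeasurable_mk).congr fun f => ?_
    refine integral_congr_ae ?_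
    filter_upwards [hae] with t ht
    rw [ht]
  set A : ℕ → Set ℝ := fun k => {t | ‖x t‖ ≤ k * weight t ^ 2} with hA
  have hAm : ∀ k, MeasurableSet (A k) := fun k =>
    measurableSet_le hxm.norm.measurable
      (measurable_const.mul (continuous_weight.measurable.pow_const 2))
  have hxA : ∀ k, Integrable ((A k).indicator x) := fun k => hx.indicator (hAm k)
  have hlim : Tendsto (fun k : ℕ => m * C * ∫ t, ‖x t - (A k).indicator x t‖) atTop (𝓝 0) := by
    rw [← mul_zero ((m : ℝ) * C)]
    refine Tendsto.const_mul _ ?_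
    rw [← integral_zero ℝ ℝ (μ := volume)]
    refine tendsto_integral_of_dominated_convergence (fun t => ‖x t‖)
      (fun k => (hx.sub (hxA k)).norm.1) hx.norm (fun k => ae_of_all _ fun t => ?_)
      (ae_of_all _ fun t => ?_)
    · by_cases ht : t ∈ A k <;> simp [ht]
    · refine tendsto_const_nhds.congr' ?_
      obtain ⟨k₀, hk₀⟩ := exists_nat_ge (‖x t‖ / weight t ^ 2)
      filter_upwards [eventually_ge_atTop k₀] with k hk
      have hw : 0 < weight t ^ 2 := pow_pos (weight_pos t) 2
      have ht : t ∈ A k := by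
        have : (k₀ : ℝ) ≤ k := by exact_mod_cast hk
        exact (div_le_iff₀ hw).1 (hk₀.trans this)
      simp [ht]
  have hunif : TendstoUniformly
      (fun (k : ℕ) (u : controlFunctions m U) => pairing u ((A k).indicator x))
      (fun u => pairing u x) atTop := by
    rw [Metric.tendstoUniformly_iff]
    intro ε hε
    filter_upwards [hlim.eventually_lt_const hε] with k hk u
    rw [dist_eq_norm, pairing_sub hC u hx (hxA k)]
    exact (norm_pairing_le hC u (hx.sub (hxA k))).trans_lt hk
  refine (hunif.comp _).continuous (Frequently.of_forall fun k => ?_)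
  obtain ⟨g, hg⟩ := exists_inner_eq_pairing (U := U) (x := (A k).indicator x) (c := k) (hxA k).1
    fun t => by
      by_cases ht : t ∈ A k
      · simpa [ht] using (show ‖x t‖ ≤ k * weight t ^ 2 from ht)
      · simp only [ht, not_false_eq_true, Set.indicator_of_notMem, norm_zero]
        positivity
  simp only [Function.comp_def, hg]
  exact (continuous_weakSpace_inner g).comp continuous_subtype_val

theorem compactSpace_controlFunctions (hUcomp : IsCompact U) (hUconv : Convex ℝ U) :
    CompactSpace (controlFunctions m U) := by
  have hb := hUcomp.isBounded
  have hK := isCompact_toWeakSpace_image (isBounded_weightedControls (m := m) hb)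
    (isClosed_weightedControls hUcomp.isClosed) (convex_weightedControls hUconv)
  have := isCompact_iff_compactSpace.1 hK
  refine Function.Surjective.compactSpace
    (f := fun f : toWeakSpace ℝ (L2Space m) '' weightedControls m U =>
      unweight (U := U) ⟨(toWeakSpace ℝ (L2Space m)).symm f.1, by
        obtain ⟨g, hg, hgf⟩ := f.2
        rw [← hgf]
        simpa using hg⟩) (continuous_of_pairing fun x hx => continuous_pairing_unweight hb hx) ?_
  intro u
  obtain ⟨f, hf⟩ := unweight_surjective hb u
  refine ⟨⟨toWeakSpace ℝ (L2Space m) f.1, Set.mem_image_of_mem _ f.2⟩, ?_⟩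
  simpa using hf

/-! ### Shadowing -/

/-- The shadowing control: on `[j, j + 1)` it equals `u j` shifted back to time `j`. -/
noncomputable def shadow (u : ℤ → controlFunctions m U) : controlFunctions m U :=
  glue fun j => shiftFlow (-(j : ℝ)) (u j)

theorem shiftFlow_shadow (n : ℤ) (u : ℤ → controlFunctions m U) :
    shiftFlow (n : ℝ) (shadow u) = shadow fun j => u (n + j) := by
  unfold shadow
  rw [shiftFlow_glue]
  congr 1
  funext j
  rw [shiftFlow_shiftFlow]
  congr 1
  push_cast
  ring

/-- A genuine orbit is shadowed by its own initial point. -/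
theorem shadow_of_orbit {u : ℤ → controlFunctions m U}
    (hu : ∀ j, shiftFlow 1 (u j) = u (j + 1)) : shadow u = u 0 := by
  have step : ∀ j : ℤ, shiftFlow (-((j + 1 : ℤ) : ℝ)) (u (j + 1)) = shiftFlow (-(j : ℝ)) (u j) := by
    intro j
    rw [← hu, shiftFlow_shiftFlow]
    congr 1
    push_cast
    ring
  have h : ∀ j : ℤ, shiftFlow (-(j : ℝ)) (u j) = u 0 := by
    intro j
    induction j using Int.induction_on with
    | zero => simp [shiftFlow_zero]
    | succ k ih => rw [step, ih]
    | pred k ih => rw [← step, sub_add_cancel, ih]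
  unfold shadow
  simp_rw [h]
  exact glue_const _

theorem continuous_shadow (hU : Bornology.IsBounded U) :
    Continuous (shadow : (ℤ → controlFunctions m U) → controlFunctions m U) :=
  (continuous_glue hU).comp
    (continuous_pi fun j => (continuous_shiftFlow _).comp (continuous_apply j))

end ShiftShadowing

/-- Shadowing property of the shift flow `θ` on `𝒰`: for every metric on `𝒰` compatible
with the weak* topology and every `ε > 0` there is `δ > 0` such that every bi-infinite
sequence `(u^i)` with `d(θ_1 u^i, u^{i+1}) ≤ δ` is `ε`-shadowed by the `θ`-orbit (at
integer times) of some `u ∈ 𝒰`; if `(u^i)` is `n`-periodic, `u` can be chosen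
`n`-periodic, i.e. `θ_n u = u`. -/
theorem shiftFlow_shadowing (m : ℕ) (U : Set (Fin m → ℝ))
    (hUcomp : IsCompact U) (hUconv : Convex ℝ U)
    (M : MetricSpace (controlFunctions m U))
    (hcompat : M.toUniformSpace.toTopologicalSpace = weakStarTopology m U) :
    ∀ ε : ℝ, 0 < ε → ∃ δ : ℝ, 0 < δ ∧
      ∀ u : ℤ → controlFunctions m U,
        (∀ i : ℤ, @dist _ M.toDist (shiftFlow 1 (u i)) (u (i + 1)) ≤ δ) →
        (∃ v : controlFunctions m U,
            ∀ i : ℤ, @dist _ M.toDist (shiftFlow (i : ℝ) v) (u i) ≤ ε) ∧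
        ∀ n : ℕ, 0 < n → (∀ i : ℤ, u (i + n) = u i) →
          ∃ v : controlFunctions m U,
            (∀ i : ℤ, @dist _ M.toDist (shiftFlow (i : ℝ) v) (u i) ≤ ε) ∧
            shiftFlow (n : ℝ) v = v := by
  intro ε hε
  have hcomp := ShiftShadowing.compactSpace_controlFunctions hUcomp hUconv
  have hshift := ShiftShadowing.continuous_shiftFlow (U := U) (m := m) 1
  have hshadow := ShiftShadowing.continuous_shadow (m := m) hUcomp.isBounded
  rw [← hcompat] at hcomp hshift hshadow
  -- The sequences with jumps at most `1 / (k + 1)` for which shadowing fails at time `0`.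
  let K : ℕ → Set (ℤ → controlFunctions m U) := fun k =>
    {w | ε ≤ dist (ShiftShadowing.shadow w) (w 0)} ∩
      ⋂ j : ℤ, {w | dist (shiftFlow 1 (w j)) (w (j + 1)) ≤ 1 / ((k : ℝ) + 1)}
  have hKc : ∀ k, IsClosed (K k) := fun k =>
    (isClosed_le continuous_const (hshadow.dist (continuous_apply 0))).inter
      (isClosed_iInter fun j => isClosed_le
        ((hshift.comp (continuous_apply j)).dist (continuous_apply (j + 1))) continuous_const)
  have hKmono : ∀ k, K (k + 1) ⊆ K k := by
    rintro k w ⟨h1, h2⟩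
    refine ⟨h1, Set.mem_iInter.2 fun j => ?_⟩
    have h3 : dist (shiftFlow 1 (w j)) (w (j + 1)) ≤ 1 / (((k + 1 : ℕ) : ℝ) + 1) :=
      Set.mem_iInter.1 h2 j
    refine h3.trans (?_ : _ ≤ 1 / ((k : ℝ) + 1))
    exact one_div_le_one_div_of_le (by positivity) (by push_cast; linarith)
  have hK : ∃ k, K k = ∅ := by
    by_contra! hne
    obtain ⟨w, hw⟩ := IsCompact.nonempty_iInter_of_sequence_nonempty_isCompact_isClosed K hKmono
      hne (hKc 0).isCompact hKc
    rw [Set.mem_iInter] at hw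
    have horbit : ∀ j, shiftFlow 1 (w j) = w (j + 1) := by
      intro j
      refine dist_le_zero.1 (ge_of_tendsto' tendsto_one_div_add_atTop_nhds_zero_nat fun k => ?_)
      exact Set.mem_iInter.1 (hw k).2 j
    have h0 : ε ≤ dist (ShiftShadowing.shadow w) (w 0) := (hw 0).1
    rw [ShiftShadowing.shadow_of_orbit horbit, dist_self] at h0
    exact hε.not_ge h0
  obtain ⟨k, hk⟩ := hK
  refine ⟨1 / ((k : ℝ) + 1), by positivity, fun u hu => ?_⟩
  have hv : ∀ i : ℤ, dist (shiftFlow (i : ℝ) (ShiftShadowing.shadow u)) (u i) ≤ ε := by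
    intro i
    by_contra! hlt
    have hmem : (fun j => u (i + j)) ∈ K k := by
      refine ⟨?_, Set.mem_iInter.2 fun j => ?_⟩
      · rw [ShiftShadowing.shiftFlow_shadow] at hlt
        simpa using hlt.le
      · simpa [add_assoc] using hu (i + j)
    rw [hk] at hmem
    exact hmem
  refine ⟨⟨_, hv⟩, fun n _ hper => ⟨_, hv, ?_⟩⟩
  have h := ShiftShadowing.shiftFlow_shadow (n : ℤ) u
  rw [Int.cast_natCast] at h
  rw [h]
  congr 1
  funext j
  rw [add_comm, hper]
end

section
/- Let X := {u : [0,1] → ℝ^m : u measurable with u(t) ∈ U a.e.}, endowed with the weak* topology of L^∞([0,1],ℝ^m) = L^1([0,1],ℝ^m)*, and endow X^ℤ with the product topology. Then the map α : 𝒰 → X^ℤ defined by α(u) = (u_k)_{k∈ℤ}, where u_k(t) := u(t + k) for t ∈ [0,1], is a homeomorphism, and it conjugates the time-one map θ_1 of the shift flow on 𝒰 with the shift homeomorphism s on X^ℤ (s((ξ_n)) = (ξ_{n+1})): α ∘ θ_1 = s ∘ α. -/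
/-!
The map `α` is a bijection because the unit intervals `[k, k+1]`, `k ∈ ℤ`, cover `ℝ` and overlap
only in null sets: a sequence `ξ` is glued to the function `s ↦ ξ_⌊s⌋(s - ⌊s⌋)`
(`glueSequence`), and a function is determined a.e. by its translated restrictions
(`ae_of_forall_ae_unit`).

`α` is continuous because pairing `u_k` with `x ∈ L¹([0,1])` is the same as pairing `u` with the
translate of `x` to `[k, k+1]`, extended by zero. Conversely, the pairing of the glued function
with `x ∈ L¹(ℝ)` is the series over `k` of the pairings of `ξ_k` with `x(· + k)|_[0,1]`
(`hasSum_integral_unit`). Each term is continuous in `ξ`, and since `U` is bounded the series is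
dominated, uniformly in `ξ`, by a multiple of `∑_k ‖x(· + k)‖_{L¹([0,1])} < ∞`, so its sum is
continuous as well (`continuous_glueSequence`). The conjugacy holds because `u((t + k) + 1)` and
`u(t + (k + 1))` agree.
-/

open MeasureTheory Filter

/-- The set `X` of admissible control functions on `[0,1]` with control range `U`,
viewed as a.e. equivalence classes w.r.t. Lebesgue measure restricted to `[0,1]`
(i.e. as a subset of `L^∞([0,1],ℝ^m)`). -/
def controlFunctionsUnit (m : ℕ) (U : Set (Fin m → ℝ)) :
    Set (ℝ →ₘ[volume.restrict (Set.Icc (0 : ℝ) 1)] (Fin m → ℝ)) :=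
  {u | ∀ᵐ t ∂volume.restrict (Set.Icc (0 : ℝ) 1), u t ∈ U}

/-- The weak* topology on `X`, induced by the pairings with `L¹([0,1],ℝ^m)`. -/
noncomputable def weakStarTopologyUnit (m : ℕ) (U : Set (Fin m → ℝ)) :
    TopologicalSpace (controlFunctionsUnit m U) :=
  TopologicalSpace.induced
    (fun u : controlFunctionsUnit m U =>
      fun x : Lp (Fin m → ℝ) 1 (volume.restrict (Set.Icc (0 : ℝ) 1)) =>
        ∫ t : ℝ, ∑ i,
          (u : ℝ →ₘ[volume.restrict (Set.Icc (0 : ℝ) 1)] (Fin m → ℝ)) t i * x t i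
            ∂volume.restrict (Set.Icc (0 : ℝ) 1))
    Pi.topologicalSpace

theorem quasiMeasurePreserving_add_int (k : ℤ) :
    Measure.QuasiMeasurePreserving (fun t : ℝ => t + k)
      (volume.restrict (Set.Icc (0 : ℝ) 1)) volume := by
  refine ⟨measurable_add_const (k : ℝ), ?_⟩
  have hle : (volume.restrict (Set.Icc (0 : ℝ) 1)).map (fun t : ℝ => t + k)
      ≤ volume.map (fun t : ℝ => t + k) :=
    Measure.map_mono Measure.restrict_le_self (measurable_add_const (k : ℝ))
  have hmap : volume.map (fun t : ℝ => t + k) = volume :=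
    (measurePreserving_add_right volume (k : ℝ)).map_eq
  rw [hmap] at hle
  exact Measure.absolutelyContinuous_of_le hle

/-- The map `α : 𝒰 → X^ℤ`, `α(u)_k = u_k` where `u_k(t) = u(t + k)` for `t ∈ [0,1]`. -/
noncomputable def controlToSequence (m : ℕ) (U : Set (Fin m → ℝ))
    (u : controlFunctions m U) (k : ℤ) : controlFunctionsUnit m U :=
  ⟨u.1.compQuasiMeasurePreserving (fun t : ℝ => t + k) (quasiMeasurePreserving_add_int k), by
    have h₁ := AEEqFun.coeFn_compQuasiMeasurePreserving u.1 (quasiMeasurePreserving_add_int k)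
    have hu : ∀ᵐ s : ℝ, u.1 s ∈ U := u.2
    have h₂ := (quasiMeasurePreserving_add_int k).tendsto_ae.eventually hu
    filter_upwards [h₁, h₂] with t ht₁ ht₂
    rw [ht₁]; exact ht₂⟩

theorem measurePreserving_add_int_unit (k : ℤ) :
    MeasurePreserving (fun t : ℝ => t + k) (volume.restrict (Set.Icc (0 : ℝ) 1))
      (volume.restrict (Set.Icc (k : ℝ) (k + 1))) := by
  have h := (measurePreserving_add_right volume (k : ℝ)).restrict_preimage_emb
    (measurableEmbedding_addRight (k : ℝ)) (Set.Icc (k : ℝ) (k + 1))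
  have e : (fun t : ℝ => t + k) ⁻¹' Set.Icc (k : ℝ) (k + 1) = Set.Icc 0 1 := by
    ext t
    simp only [Set.mem_preimage, Set.mem_Icc]
    constructor <;> rintro ⟨h₁, h₂⟩ <;> constructor <;> linarith
  rwa [e] at h

/-- A property holds a.e. on `ℝ` as soon as all its integer translates hold a.e. on `[0,1]`. -/
theorem ae_of_forall_ae_unit {p : ℝ → Prop}
    (h : ∀ k : ℤ, ∀ᵐ t ∂volume.restrict (Set.Icc (0 : ℝ) 1), p (t + k)) : ∀ᵐ s : ℝ, p s := by
  rw [← Measure.restrict_univ (μ := (volume : Measure ℝ)), ← iUnion_Icc_intCast ℝ,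
    ae_restrict_iUnion_iff]
  intro k
  rw [← (measurePreserving_add_int_unit k).map_eq,
    (measurableEmbedding_addRight (k : ℝ)).ae_map_iff]
  exact h k

/-- The integral over `ℝ` splits into the integrals over the unit intervals `[k, k+1]`, each
translated to `[0,1]`. -/
theorem hasSum_integral_unit {f : ℝ → ℝ} (hf : Integrable f) :
    HasSum (fun k : ℤ => ∫ t in Set.Icc (0 : ℝ) 1, f (t + k)) (∫ s, f s) := by
  have h := hasSum_integral_iUnion (μ := volume) (f := f)
    (s := fun n : ℤ => Set.Ioc (n : ℝ) (n + 1)) (fun _ => measurableSet_Ioc)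
    (Set.pairwise_disjoint_Ioc_intCast ℝ) hf.integrableOn
  rw [iUnion_Ioc_intCast, setIntegral_univ] at h
  have e : (fun k : ℤ => ∫ t in Set.Icc (0 : ℝ) 1, f (t + k)) =
      fun k : ℤ => ∫ s in Set.Ioc (k : ℝ) (k + 1), f s := by
    funext k
    rw [← integral_Icc_eq_integral_Ioc]
    exact (measurePreserving_add_int_unit k).integral_comp
      (measurableEmbedding_addRight (k : ℝ)) f
  rwa [e]

theorem coeFn_controlToSequence {m : ℕ} {U : Set (Fin m → ℝ)} (u : controlFunctions m U) (k : ℤ) :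
    ∀ᵐ t ∂volume.restrict (Set.Icc (0 : ℝ) 1),
      (controlToSequence m U u k).1 t = u.1 (t + k) :=
  AEEqFun.coeFn_compQuasiMeasurePreserving u.1 (quasiMeasurePreserving_add_int k)

theorem measurable_glue {m : ℕ} {U : Set (Fin m → ℝ)} (ξ : ℤ → controlFunctionsUnit m U) :
    Measurable (fun s : ℝ => (ξ ⌊s⌋).1 (Int.fract s)) := by
  have h : Measurable (fun p : ℝ × ℤ => (ξ p.2).1 p.1) :=
    measurable_from_prod_countable_left fun k => (ξ k).1.measurable
  exact h.comp (measurable_fract.prodMk Int.measurable_floor)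

/-- Gluing the representatives of `ξ` recovers `ξ k` on the `k`-th unit interval; only the right
endpoint `t = 1` is exceptional. -/
theorem glue_add_int {m : ℕ} {U : Set (Fin m → ℝ)} (ξ : ℤ → controlFunctionsUnit m U) (k : ℤ) :
    ∀ᵐ t : ℝ ∂volume.restrict (Set.Icc (0 : ℝ) 1),
      (ξ ⌊t + k⌋).1 (Int.fract (t + k)) = (ξ k).1 t := by
  have hI : ∀ᵐ t ∂volume.restrict (Set.Icc (0 : ℝ) 1), t ∈ Set.Ico (0 : ℝ) 1 := by
    rw [← restrict_Ico_eq_restrict_Icc]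
    exact ae_restrict_mem measurableSet_Ico
  filter_upwards [hI] with t ht
  have h : ⌊t⌋ = 0 := Int.floor_eq_zero_iff.2 ht
  simp [Int.fract, h]

/-- The inverse of `α`: the control function `s ↦ ξ_⌊s⌋(s - ⌊s⌋)`. -/
noncomputable def glueSequence {m : ℕ} {U : Set (Fin m → ℝ)}
    (ξ : ℤ → controlFunctionsUnit m U) : controlFunctions m U :=
  ⟨AEEqFun.mk _ (measurable_glue ξ).aestronglyMeasurable, by
    have h : ∀ᵐ s : ℝ, (ξ ⌊s⌋).1 (Int.fract s) ∈ U := by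
      refine ae_of_forall_ae_unit fun k => ?_
      have hk : ∀ᵐ t ∂volume.restrict (Set.Icc (0 : ℝ) 1), (ξ k).1 t ∈ U := (ξ k).2
      filter_upwards [glue_add_int ξ k, hk] with t h₁ h₂
      rwa [h₁]
    filter_upwards [AEEqFun.coeFn_mk _ (measurable_glue ξ).aestronglyMeasurable, h] with s h₁ h₂
    rwa [h₁]⟩

theorem coeFn_glueSequence_add_int {m : ℕ} {U : Set (Fin m → ℝ)}
    (ξ : ℤ → controlFunctionsUnit m U) (k : ℤ) :
    ∀ᵐ t ∂volume.restrict (Set.Icc (0 : ℝ) 1), (glueSequence ξ).1 (t + k) = (ξ k).1 t := by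
  have h := (quasiMeasurePreserving_add_int k).tendsto_ae.eventually
    (AEEqFun.coeFn_mk _ (measurable_glue ξ).aestronglyMeasurable)
  filter_upwards [h, glue_add_int ξ k] with t h₁ h₂
  exact h₁.trans h₂

theorem controlToSequence_glueSequence {m : ℕ} {U : Set (Fin m → ℝ)}
    (ξ : ℤ → controlFunctionsUnit m U) : controlToSequence m U (glueSequence ξ) = ξ := by
  funext k
  refine Subtype.ext (AEEqFun.ext ?_)
  filter_upwards [coeFn_controlToSequence (glueSequence ξ) k,
    coeFn_glueSequence_add_int ξ k] with t h₁ h₂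
  rw [h₁, h₂]

theorem controlToSequence_injective {m : ℕ} {U : Set (Fin m → ℝ)} :
    Function.Injective (controlToSequence m U) := by
  intro u v huv
  refine Subtype.ext (AEEqFun.ext (ae_of_forall_ae_unit fun k => ?_))
  filter_upwards [coeFn_controlToSequence u k, coeFn_controlToSequence v k] with t h₁ h₂
  rw [← h₁, ← h₂, huv]

theorem continuous_pairing {m : ℕ} {U : Set (Fin m → ℝ)} {f : ℝ → Fin m → ℝ}
    (hf : Integrable f) :
    letI : TopologicalSpace (controlFunctions m U) := weakStarTopology m U
    Continuous fun u : controlFunctions m U => ∫ t, ∑ i, u.1 t i * f t i := by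
  let _ : TopologicalSpace (controlFunctions m U) := weakStarTopology m U
  have h := (continuous_apply (hf.toL1 f)).comp
    (continuous_induced_dom (f := fun u : controlFunctions m U =>
      fun x : Lp (Fin m → ℝ) 1 (volume : Measure ℝ) => ∫ t : ℝ, ∑ i, u.1 t i * x t i))
  refine h.congr fun u => integral_congr_ae ?_
  filter_upwards [hf.coeFn_toL1] with t ht
  rw [ht]

theorem continuous_pairing_unit {m : ℕ} {U : Set (Fin m → ℝ)} {f : ℝ → Fin m → ℝ}
    (hf : Integrable f (volume.restrict (Set.Icc (0 : ℝ) 1))) :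
    letI : TopologicalSpace (controlFunctionsUnit m U) := weakStarTopologyUnit m U
    Continuous fun u : controlFunctionsUnit m U =>
      ∫ t in Set.Icc (0 : ℝ) 1, ∑ i, u.1 t i * f t i := by
  let _ : TopologicalSpace (controlFunctionsUnit m U) := weakStarTopologyUnit m U
  have h := (continuous_apply (hf.toL1 f)).comp
    (continuous_induced_dom (f := fun u : controlFunctionsUnit m U =>
      fun x : Lp (Fin m → ℝ) 1 (volume.restrict (Set.Icc (0 : ℝ) 1)) =>
        ∫ t in Set.Icc (0 : ℝ) 1, ∑ i, u.1 t i * x t i))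
  refine h.congr fun u => integral_congr_ae ?_
  filter_upwards [hf.coeFn_toL1] with t ht
  rw [ht]

theorem continuous_controlToSequence (m : ℕ) (U : Set (Fin m → ℝ)) :
    letI : TopologicalSpace (controlFunctions m U) := weakStarTopology m U
    letI : TopologicalSpace (controlFunctionsUnit m U) := weakStarTopologyUnit m U
    Continuous (controlToSequence m U) := by
  let _ : TopologicalSpace (controlFunctions m U) := weakStarTopology m U
  let _ : TopologicalSpace (controlFunctionsUnit m U) := weakStarTopologyUnit m U
  refine continuous_pi fun k => continuous_induced_rng.2 (continuous_pi fun x => ?_)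
  -- `y` is `x` translated to `[k, k+1]` and extended by zero.
  let y : ℝ → Fin m → ℝ := (Set.Icc (k : ℝ) (k + 1)).indicator fun s => x (s - k)
  have hy : Integrable y := by
    rw [integrable_indicator_iff measurableSet_Icc, IntegrableOn,
      ← (measurePreserving_add_int_unit k).integrable_comp_emb
        (measurableEmbedding_addRight (k : ℝ))]
    simpa [Function.comp_def] using L1.integrable_coeFn x
  refine (continuous_pairing (U := U) hy).congr fun u => ?_
  have e : (fun s => ∑ i, u.1 s i * y s i) =
      (Set.Icc (k : ℝ) (k + 1)).indicator fun s => ∑ i, u.1 s i * x (s - k) i := by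
    funext s
    by_cases hs : s ∈ Set.Icc (k : ℝ) (k + 1) <;> simp only [y, Set.indicator, hs, if_true, if_false]
    simp
  rw [e, integral_indicator measurableSet_Icc,
    ← (measurePreserving_add_int_unit k).integral_comp (measurableEmbedding_addRight (k : ℝ))]
  refine integral_congr_ae ?_
  filter_upwards [coeFn_controlToSequence u k] with t ht
  simp [ht]

theorem continuous_glueSequence (m : ℕ) (U : Set (Fin m → ℝ)) (hU : IsCompact U) :
    letI : TopologicalSpace (controlFunctions m U) := weakStarTopology m U
    letI : TopologicalSpace (controlFunctionsUnit m U) := weakStarTopologyUnit m U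
    Continuous (glueSequence : (ℤ → controlFunctionsUnit m U) → controlFunctions m U) := by
  let _ : TopologicalSpace (controlFunctions m U) := weakStarTopology m U
  let _ : TopologicalSpace (controlFunctionsUnit m U) := weakStarTopologyUnit m U
  obtain ⟨C, hC⟩ := hU.isBounded.exists_norm_le
  refine continuous_induced_rng.2 (continuous_pi fun x => ?_)
  have hx : Integrable x := L1.integrable_coeFn x
  have hG : Integrable fun s => C * ∑ i, ‖x s i‖ :=
    (integrable_finsetSum _ fun i _ => (hx.eval i).norm).const_mul C
  have hbound : ∀ v ∈ U, ∀ w : Fin m → ℝ, ‖∑ i, v i * w i‖ ≤ C * ∑ i, ‖w i‖ := by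
    intro v hv w
    rw [Finset.mul_sum]
    refine norm_sum_le_of_le _ fun i _ => ?_
    rw [norm_mul]
    exact mul_le_mul_of_nonneg_right ((norm_le_pi_norm v i).trans (hC v hv)) (norm_nonneg _)
  have hshift : ∀ {E : Type} [NormedAddCommGroup E] {g : ℝ → E} (_ : Integrable g) (k : ℤ),
      Integrable (fun t => g (t + k)) (volume.restrict (Set.Icc (0 : ℝ) 1)) :=
    fun hg k => (measurePreserving_add_int_unit k).integrable_comp_of_integrable
      hg.integrableOn
  have key : ∀ ξ : ℤ → controlFunctionsUnit m U,
      ∑' k : ℤ, ∫ t in Set.Icc (0 : ℝ) 1, ∑ i, (ξ k).1 t i * x (t + k) i =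
        ∫ s, ∑ i, (glueSequence ξ).1 s i * x s i := by
    intro ξ
    have hint : Integrable fun s => ∑ i, (glueSequence ξ).1 s i * x s i := by
      refine hG.mono' ?_ ?_
      · have hm : Measurable fun s => (glueSequence ξ).1 s := (glueSequence ξ).1.measurable
        exact Finset.aestronglyMeasurable_fun_sum _ fun i _ =>
          ((measurable_pi_iff.1 hm i).aestronglyMeasurable).mul (hx.eval i).aestronglyMeasurable
      · have hmem : ∀ᵐ s : ℝ, (glueSequence ξ).1 s ∈ U := (glueSequence ξ).2
        filter_upwards [hmem] with s hs
        exact hbound _ hs _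
    rw [← (hasSum_integral_unit hint).tsum_eq]
    refine tsum_congr fun k => integral_congr_ae ?_
    filter_upwards [coeFn_glueSequence_add_int ξ k] with t ht
    rw [ht]
  refine Continuous.congr (continuous_tsum (fun k => ?_) (hasSum_integral_unit hG).summable
    fun k ξ => ?_) key
  · exact (continuous_pairing_unit (U := U) (hshift hx k)).comp (continuous_apply k)
  · refine norm_integral_le_of_norm_le (hshift hG k) ?_
    have hmem : ∀ᵐ t ∂volume.restrict (Set.Icc (0 : ℝ) 1), (ξ k).1 t ∈ U := (ξ k).2
    filter_upwards [hmem] with t ht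
    exact hbound _ ht _

theorem controlToSequence_shiftFlow_one {m : ℕ} {U : Set (Fin m → ℝ)}
    (u : controlFunctions m U) (k : ℤ) :
    controlToSequence m U (shiftFlow 1 u) k = controlToSequence m U u (k + 1) := by
  refine Subtype.ext (AEEqFun.ext ?_)
  have h := (quasiMeasurePreserving_add_int k).tendsto_ae.eventually
    (AEEqFun.coeFn_compMeasurePreserving u.1 (measurePreserving_add_right volume (1 : ℝ)))
  filter_upwards [coeFn_controlToSequence (shiftFlow 1 u) k,
    coeFn_controlToSequence u (k + 1), h] with t h₁ h₂ h₃
  rw [h₁, h₂]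
  refine h₃.trans ?_
  simp [add_assoc]

/-- The map `α : 𝒰 → X^ℤ`, `α(u) = (u_k)_{k∈ℤ}` with `u_k(t) = u(t+k)` for `t ∈ [0,1]`,
is a homeomorphism from `𝒰` with the weak* topology onto `X^ℤ` with the product of the
weak* topologies, and it conjugates the time-one map `θ_1` of the shift flow on `𝒰`
with the shift homeomorphism `s` on `X^ℤ` (`s((ξ_n)) = (ξ_{n+1})`): `α ∘ θ_1 = s ∘ α`. -/
theorem controlToSequence_homeomorph_and_conjugates
    (m : ℕ) (U : Set (Fin m → ℝ)) (hUcomp : IsCompact U) (hUconv : Convex ℝ U) :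
    letI : TopologicalSpace (controlFunctions m U) := weakStarTopology m U
    letI : TopologicalSpace (controlFunctionsUnit m U) := weakStarTopologyUnit m U
    ∃ h : controlFunctions m U ≃ₜ (ℤ → controlFunctionsUnit m U),
      (∀ u : controlFunctions m U, h u = controlToSequence m U u) ∧
      ∀ (u : controlFunctions m U) (k : ℤ),
        h (shiftFlow 1 u) k = h u (k + 1) := by
  let _ : TopologicalSpace (controlFunctions m U) := weakStarTopology m U
  let _ : TopologicalSpace (controlFunctionsUnit m U) := weakStarTopologyUnit m U
  exact ⟨{
      toFun := controlToSequence m U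
      invFun := glueSequence
      left_inv := fun u => controlToSequence_injective (controlToSequence_glueSequence _)
      right_inv := controlToSequence_glueSequence
      continuous_toFun := continuous_controlToSequence m U
      continuous_invFun := continuous_glueSequence m U hUcomp },
    fun _ => rfl, controlToSequence_shiftFlow_one⟩
end

section
/- Assume additionally that 0 ∈ int U. Then the set C^∞(ℝ, int U) of smooth functions from ℝ to ℝ^m taking values in the interior of U is dense in 𝒰 with respect to the weak* topology. -/
/-!
Mollify and shrink. Given `u ∈ 𝒰`, let `φₙ` be normalized smooth bumps on `ℝ` whose supports shrink
to `0`, and put `fₙ = (1 - 1/(n+2)) • (φₙ ⋆ u)`.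

* `fₙ` is smooth, because `φₙ` is smooth with compact support and `u` is bounded.
* `(φₙ ⋆ u)(t)` is an average of values of `u` against a probability density, hence lies in the
  closed convex set `U` (`normed_convolution_mem`); shrinking towards `0 ∈ int U` moves it into
  `int U`.
* `fₙ → u` almost everywhere by Lebesgue differentiation. Since all the functions are bounded by a
  common constant, dominated convergence gives `∫ ⟨fₙ, x⟩ → ∫ ⟨u, x⟩` for every `x ∈ L¹`
  (`tendsto_pairing`), which is weak* convergence.
-/

open MeasureTheory Filter

open scoped Topology Convolution

/-- A closed convex set is stable under averaging by a normalized bump: the convolution at `t` is an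
integral against the probability measure with density `φ.normed`. -/
theorem normed_convolution_mem {m : ℕ} {U : Set (Fin m → ℝ)} (hUclosed : IsClosed U)
    (hUconv : Convex ℝ U) (φ : ContDiffBump (0 : ℝ)) {g : ℝ → Fin m → ℝ}
    (hgU : ∀ᵐ s : ℝ, g s ∈ U) (hg : LocallyIntegrable g volume) (t : ℝ) :
    (φ.normed volume ⋆[ContinuousLinearMap.lsmul ℝ ℝ, volume] g) t ∈ U := by
  set ρ : ℝ → ENNReal := fun s => ENNReal.ofReal (φ.normed volume s) with hρ
  have hρm : Measurable ρ := φ.continuous_normed.measurable.ennreal_ofReal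
  have hρtop : ∀ᵐ s : ℝ, ρ s < ⊤ := ae_of_all _ fun _ => ENNReal.ofReal_lt_top
  have hρreal : ∀ s, (ρ s).toReal = φ.normed volume s := fun s =>
    ENNReal.toReal_ofReal (φ.nonneg_normed s)
  have hprob : IsProbabilityMeasure (volume.withDensity ρ) := by
    constructor
    rw [withDensity_apply _ MeasurableSet.univ, Measure.restrict_univ, hρ,
      ← ofReal_integral_eq_lintegral_ofReal φ.integrable_normed
        (ae_of_all _ fun s => φ.nonneg_normed s), φ.integral_normed, ENNReal.ofReal_one]
  have hshift : ∀ᵐ s : ℝ, g (t - s) ∈ U :=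
    (Measure.measurePreserving_sub_left (volume : Measure ℝ) t).quasiMeasurePreserving.tendsto_ae.eventually hgU
  have hconv : ConvolutionExistsAt (φ.normed volume) g t (ContinuousLinearMap.lsmul ℝ ℝ) volume :=
    φ.hasCompactSupport_normed.convolutionExists_left _ φ.continuous_normed hg t
  have hint : Integrable (fun s => g (t - s)) (volume.withDensity ρ) := by
    rw [integrable_withDensity_iff_integrable_smul' hρm hρtop]
    simp only [hρreal]
    exact hconv
  have hmem := hUconv.integral_mem hUclosed
    ((withDensity_absolutelyContinuous volume ρ).ae_le hshift) hint
  rw [integral_withDensity_eq_integral_toReal_smul hρm hρtop] at hmem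
  simp only [hρreal] at hmem
  exact hmem

/-- Uniformly bounded a.e. convergence implies convergence of the pairing with any integrable
function. -/
theorem tendsto_pairing {m : ℕ} {f : ℕ → ℝ → Fin m → ℝ} {g x : ℝ → Fin m → ℝ} {C : ℝ}
    (hf : ∀ n, AEStronglyMeasurable (f n) volume) (hC : ∀ n, ∀ᵐ t : ℝ, ‖f n t‖ ≤ C)
    (hx : Integrable x volume)
    (hlim : ∀ᵐ t : ℝ, Tendsto (fun n => f n t) atTop (𝓝 (g t))) :
    Tendsto (fun n => ∫ t : ℝ, ∑ i, f n t i * x t i) atTop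
      (𝓝 (∫ t : ℝ, ∑ i, g t i * x t i)) := by
  refine tendsto_integral_of_dominated_convergence (fun t => ∑ _i : Fin m, C * ‖x t‖) ?_ ?_ ?_ ?_
  · intro n
    refine Finset.aestronglyMeasurable_fun_sum _ fun i _ => ?_
    exact ((continuous_apply i).comp_aestronglyMeasurable (hf n)).mul
      ((continuous_apply i).comp_aestronglyMeasurable hx.aestronglyMeasurable)
  · exact integrable_finsetSum _ fun _ _ => hx.norm.const_mul C
  · intro n
    filter_upwards [hC n] with t ht
    refine norm_sum_le_of_le _ fun i _ => ?_
    rw [norm_mul]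
    exact mul_le_mul ((norm_le_pi_norm _ i).trans ht) (norm_le_pi_norm _ i) (norm_nonneg _)
      ((norm_nonneg _).trans ht)
  · filter_upwards [hlim] with t ht
    exact tendsto_finsetSum _ fun i _ => ((tendsto_pi_nhds.1 ht) i).mul_const _

/-- If `U ⊂ ℝ^m` is compact and convex with `0 ∈ int U`, then the set of (classes of)
smooth functions `ℝ → ℝ^m` with values in the interior of `U` is dense in `𝒰` with
respect to the weak* topology. -/
theorem smooth_controls_weakStar_dense
    (m : ℕ) (U : Set (Fin m → ℝ)) (hUcomp : IsCompact U) (hUconv : Convex ℝ U)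
    (h0U : (0 : Fin m → ℝ) ∈ interior U) :
    @Dense (controlFunctions m U) (weakStarTopology m U)
      {u : controlFunctions m U |
        ∃ f : ℝ → (Fin m → ℝ), ContDiff ℝ (⊤ : ℕ∞) f ∧ (∀ t : ℝ, f t ∈ interior U) ∧
          (u : ℝ →ₘ[(volume : Measure ℝ)] (Fin m → ℝ)) =ᵐ[(volume : Measure ℝ)] f} := by
  obtain ⟨C, hC⟩ := hUcomp.isBounded.exists_norm_le
  intro u
  have huU : ∀ᵐ t : ℝ, (u : ℝ →ₘ[(volume : Measure ℝ)] (Fin m → ℝ)) t ∈ U := u.2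
  set g : ℝ → Fin m → ℝ := ⇑(u : ℝ →ₘ[(volume : Measure ℝ)] (Fin m → ℝ))
  have hgloc : LocallyIntegrable g volume := by
    have : MemLp g ⊤ (volume : Measure ℝ) :=
      memLp_top_of_bound u.1.aestronglyMeasurable C (huU.mono fun t ht => hC _ ht)
    exact this.locallyIntegrable le_top
  let ε : ℕ → ℝ := fun n => 1 / ((n : ℝ) + 1)
  have hε : ∀ n, 0 < ε n := fun n => Nat.one_div_pos_of_nat
  have hε0 : Tendsto ε atTop (𝓝 0) := tendsto_one_div_add_atTop_nhds_zero_nat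
  let φ : ℕ → ContDiffBump (0 : ℝ) := fun n => ⟨ε n, 2 * ε n, hε n, by linarith [hε n]⟩
  let conv : ℕ → ℝ → Fin m → ℝ := fun n =>
    (φ n).normed volume ⋆[ContinuousLinearMap.lsmul ℝ ℝ, volume] g
  have hconvU : ∀ n t, conv n t ∈ U := fun n t =>
    normed_convolution_mem hUcomp.isClosed hUconv (φ n) huU hgloc t
  have hconvlim : ∀ᵐ t : ℝ, Tendsto (fun n => conv n t) atTop (𝓝 (g t)) := by
    refine ContDiffBump.ae_convolution_tendsto_right_of_locallyIntegrable (φ := φ) (K := 2)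
      ?_ (Eventually.of_forall fun n => le_rfl) hgloc
    simpa using hε0.const_mul 2
  -- The shrinking factor `1 - 1/(n+2)` is positive and strictly less than one for every `n`.
  let c : ℕ → ℝ := fun n => 1 - ε (n + 1)
  have hc0 : ∀ n, 0 ≤ c n := by
    intro n
    have : ε (n + 1) ≤ 1 := by
      simp only [ε]
      rw [div_le_one (by positivity)]
      push_cast
      linarith [(n.cast_nonneg : (0 : ℝ) ≤ n)]
    simp only [c]; linarith
  have hclim : Tendsto c atTop (𝓝 1) := by
    simpa using (hε0.comp (tendsto_add_atTop_nat 1)).const_sub 1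
  let f : ℕ → ℝ → Fin m → ℝ := fun n t => c n • conv n t
  have hfsmooth : ∀ n, ContDiff ℝ (⊤ : ℕ∞) (f n) := fun n =>
    ((φ n).hasCompactSupport_normed.contDiff_convolution_left _ (φ n).contDiff_normed
      hgloc).const_smul (c n)
  have hfint : ∀ n t, f n t ∈ interior U := by
    intro n t
    have := hUconv.combo_interior_self_mem_interior h0U (hconvU n t) (hε (n + 1)) (hc0 n)
      (by simp only [c]; ring)
    simpa [f] using this
  have hfmeas : ∀ n, AEStronglyMeasurable (f n) (volume : Measure ℝ) := fun n =>
    (hfsmooth n).continuous.aestronglyMeasurable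
  have hflim : ∀ᵐ t : ℝ, Tendsto (fun n => f n t) atTop (𝓝 (g t)) := by
    filter_upwards [hconvlim] with t ht
    simpa using hclim.smul ht
  have hmk : ∀ n, (AEEqFun.mk (f n) (hfmeas n) : ℝ → Fin m → ℝ) =ᵐ[volume] f n := fun n =>
    AEEqFun.coeFn_mk _ _
  let v : ℕ → controlFunctions m U := fun n =>
    ⟨AEEqFun.mk (f n) (hfmeas n), by
      show ∀ᵐ t : ℝ, (AEEqFun.mk (f n) (hfmeas n) : ℝ → Fin m → ℝ) t ∈ U
      filter_upwards [hmk n] with t ht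
      rw [ht]
      exact interior_subset (hfint n t)⟩
  let _ := weakStarTopology m U
  have hv : Tendsto v atTop (𝓝 u) := by
    rw [(Topology.IsInducing.mk rfl : Topology.IsInducing
      (fun u : controlFunctions m U =>
        fun x : Lp (Fin m → ℝ) 1 (volume : Measure ℝ) =>
          ∫ t : ℝ, ∑ i, (u : ℝ →ₘ[(volume : Measure ℝ)] (Fin m → ℝ)) t i * x t i)).tendsto_nhds_iff,
      tendsto_pi_nhds]
    intro x
    refine (tendsto_pairing hfmeas
      (fun n => ae_of_all _ fun t => hC _ (interior_subset (hfint n t)))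
      (L1.integrable_coeFn x) hflim).congr fun n => integral_congr_ae ?_
    filter_upwards [hmk n] with t ht
    simp only [v, ht]
  exact mem_closure_of_tendsto hv
    (Eventually.of_forall fun n => ⟨f n, hfsmooth n, hfint n, hmk n⟩)
end

section
/- Let u ∈ L¹(ℝ,ℝ^m) and let σ_n : ℝ → ℝ be a sequence of diffeomorphisms such that (i) both σ_n and σ_n^{-1} converge locally uniformly to the identity, and (ii) the sequence of derivatives (d/dt)σ_n^{-1} converges locally uniformly to the constant function 1. Then for every τ > 0, lim_{n→∞} ∫_0^τ |u(σ_n(t)) − u(t)| dt = 0. -/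
/-!
The argument is density plus a change of variables. Approximate `u` in `L¹` by a continuous,
compactly supported `g`. Then
`‖u (σ t) - u t‖ ≤ ‖(u - g) (σ t)‖ + ‖g (σ t) - g t‖ + ‖(u - g) t‖`.
The middle term is uniformly small on `(0, τ]` because `g` is uniformly continuous and `σ n → id`
uniformly there. For the first term, substituting `t = σ⁻¹ s` produces the weight `|(σ⁻¹)' s|`,
which is at most `2` on `[-1, τ + 1] ⊇ σ n '' (0, τ]` for large `n`; hence its integral is at most
twice the `L¹` norm of `u - g` (`integral_norm_comp_le`).
-/

open MeasureTheory Filter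

/-- Substitution `t = ρ s`, with `ρ` the inverse of `σ`: if `|ρ'| ≤ 2` on the image of `(0, τ]`
under `σ`, then composing with `σ` at most doubles the `L¹` norm. -/
lemma integral_norm_comp_le {E : Type*} [NormedAddCommGroup E] {f : ℝ → E} (hf : Integrable f)
    {σ ρ : ℝ → ℝ} (hρ : ContDiff ℝ 1 ρ)
    (hl : Function.LeftInverse ρ σ) (hr : Function.RightInverse ρ σ) {τ : ℝ}
    (hb : ∀ s ∈ σ '' Set.Ioc 0 τ, |deriv ρ s| ≤ 2) :
    IntegrableOn (fun t => ‖f (σ t)‖) (Set.Ioc 0 τ) ∧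
      ∫ t in Set.Ioc 0 τ, ‖f (σ t)‖ ≤ 2 * ∫ s, ‖f s‖ := by
  have himg : ρ '' (σ '' Set.Ioc 0 τ) = Set.Ioc 0 τ := hl.image_image _
  have hS : MeasurableSet (σ '' Set.Ioc 0 τ) := by
    rw [Set.image_eq_preimage_of_inverse hl hr]
    exact hρ.continuous.measurable measurableSet_Ioc
  have hd : ∀ s ∈ σ '' Set.Ioc 0 τ, HasDerivWithinAt ρ (deriv ρ s) (σ '' Set.Ioc 0 τ) s :=
    fun s _ => ((hρ.differentiable one_ne_zero) s).hasDerivAt.hasDerivWithinAt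
  have hinj : Set.InjOn ρ (σ '' Set.Ioc 0 τ) := hr.injective.injOn
  have hi := integrableOn_image_iff_integrableOn_abs_deriv_smul hS hd hinj (fun t => ‖f (σ t)‖)
  have he := integral_image_eq_integral_abs_deriv_smul hS hd hinj (fun t => ‖f (σ t)‖)
  simp only [himg, hr _, smul_eq_mul] at hi he
  have hbd : ∀ᵐ s ∂(volume.restrict (σ '' Set.Ioc 0 τ)),
      |deriv ρ s| * ‖f s‖ ≤ 2 * ‖f s‖ := by
    filter_upwards [ae_restrict_mem hS] with s hs
    exact mul_le_mul_of_nonneg_right (hb s hs) (norm_nonneg _)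
  have h2 : Integrable (fun s => 2 * ‖f s‖) := hf.norm.const_mul 2
  have hint : IntegrableOn (fun s => |deriv ρ s| * ‖f s‖) (σ '' Set.Ioc 0 τ) := by
    refine Integrable.mono' h2.integrableOn ?_ ?_
    · exact ((hρ.continuous_deriv le_rfl).abs.aestronglyMeasurable).mul
        hf.norm.aestronglyMeasurable.restrict
    · filter_upwards [hbd] with s hs
      rwa [Real.norm_of_nonneg (by positivity)]
  refine ⟨hi.2 hint, ?_⟩
  rw [he, ← integral_const_mul]
  exact (integral_mono_ae hint h2.integrableOn hbd).trans
    (setIntegral_le_integral h2 (Eventually.of_forall fun s => by positivity))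

/-- Let `u ∈ L¹(ℝ,ℝ^m)` and let `σ_n : ℝ → ℝ` be a sequence of diffeomorphisms such
that `σ_n` and `σ_n⁻¹` converge locally uniformly to the identity and the derivatives
`(σ_n⁻¹)'` converge locally uniformly to `1`. Then for every `τ > 0`,
`∫_0^τ |u(σ_n(t)) − u(t)| dt → 0`. -/
theorem integral_comp_reparam_sub_tendsto_zero
    (m : ℕ) (u : ℝ → (Fin m → ℝ)) (hu : Integrable u (volume : Measure ℝ))
    (σ σinv : ℕ → ℝ → ℝ)
    (hσdiff : ∀ n, ContDiff ℝ 1 (σ n)) (hσinvdiff : ∀ n, ContDiff ℝ 1 (σinv n))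
    (hleft : ∀ n, Function.LeftInverse (σinv n) (σ n))
    (hright : ∀ n, Function.RightInverse (σinv n) (σ n))
    (hσ : TendstoLocallyUniformly (fun n => σ n) id atTop)
    (hσinv : TendstoLocallyUniformly (fun n => σinv n) id atTop)
    (hderiv : TendstoLocallyUniformly (fun n t => deriv (σinv n) t) (fun _ => 1) atTop) :
    ∀ τ : ℝ, 0 < τ →
      Tendsto (fun n => ∫ t in Set.Ioc (0 : ℝ) τ, ‖u (σ n t) - u t‖) atTop (nhds 0) := by
  intro τ hτ
  rw [Metric.tendsto_nhds]
  intro ε hε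
  -- The three terms contribute at most `2 * δ`, `τ * δ` and `δ`.
  set δ : ℝ := ε / (τ + 4) with hδdef
  have hδ : 0 < δ := by positivity
  have hδε : (τ + 4) * δ = ε := by rw [hδdef]; field_simp
  obtain ⟨g, hgc, hgle, hg, hgi⟩ := hu.exists_hasCompactSupport_integral_sub_le hδ
  obtain ⟨η, hη, hgη⟩ := Metric.uniformContinuous_iff.1
    (hgc.uniformContinuous_of_continuous hg) δ hδ
  have hσu := Metric.tendstoUniformlyOn_iff.1
    ((tendstoLocallyUniformlyOn_iff_tendstoUniformlyOn_of_compact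
      (isCompact_Icc (a := (0 : ℝ)) (b := τ))).1 hσ.tendstoLocallyUniformlyOn)
  have hdu := Metric.tendstoUniformlyOn_iff.1
    ((tendstoLocallyUniformlyOn_iff_tendstoUniformlyOn_of_compact
      (isCompact_Icc (a := (-1 : ℝ)) (b := τ + 1))).1 hderiv.tendstoLocallyUniformlyOn) 1 one_pos
  filter_upwards [hσu η hη, hσu 1 one_pos, hdu] with n hn1 hn2 hn3
  have hb : ∀ s ∈ σ n '' Set.Ioc 0 τ, |deriv (σinv n) s| ≤ 2 := by
    rintro _ ⟨t, ht, rfl⟩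
    have h1 := hn2 t (Set.Ioc_subset_Icc_self ht)
    rw [Real.dist_eq, abs_lt] at h1
    simp only [id] at h1
    have h2 := hn3 (σ n t) ⟨by linarith [ht.1], by linarith [ht.2]⟩
    rw [Real.dist_eq, abs_lt] at h2
    rw [abs_le]
    constructor <;> linarith
  have hfi : Integrable (fun t => u t - g t) := hu.sub hgi
  obtain ⟨hi1, hle1⟩ := integral_norm_comp_le hfi (hσinvdiff n)
    (hleft n) (hright n) hb
  have hi2 : IntegrableOn (fun _ : ℝ => δ) (Set.Ioc 0 τ) := integrableOn_const (by simp) (by simp)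
  have hi3 : IntegrableOn (fun t => ‖u t - g t‖) (Set.Ioc 0 τ) := hfi.norm.integrableOn
  have hle3 : ∫ t in Set.Ioc 0 τ, ‖u t - g t‖ ≤ δ :=
    (setIntegral_le_integral hfi.norm (Eventually.of_forall fun t => norm_nonneg _)).trans hgle
  have hi12 : IntegrableOn (fun t => ‖u (σ n t) - g (σ n t)‖ + δ) (Set.Ioc 0 τ) := hi1.add hi2
  have hmain : ∫ t in Set.Ioc 0 τ, ‖u (σ n t) - u t‖ ≤
      ∫ t in Set.Ioc 0 τ, (‖u (σ n t) - g (σ n t)‖ + δ + ‖u t - g t‖) := by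
    refine integral_mono_of_nonneg (Eventually.of_forall fun t => norm_nonneg _)
      (hi12.add hi3) ?_
    filter_upwards [ae_restrict_mem measurableSet_Ioc] with t ht
    have h1 : ‖g (σ n t) - g t‖ < δ := by
      rw [← dist_eq_norm, dist_comm]
      exact hgη (hn1 t (Set.Ioc_subset_Icc_self ht))
    calc ‖u (σ n t) - u t‖
        = ‖(u (σ n t) - g (σ n t)) + (g (σ n t) - g t) - (u t - g t)‖ := by congr 1; abel
      _ ≤ ‖u (σ n t) - g (σ n t)‖ + ‖g (σ n t) - g t‖ + ‖u t - g t‖ :=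
          (norm_sub_le _ _).trans (add_le_add_left (norm_add_le _ _) _)
      _ ≤ _ := by linarith
  have hsplit : ∫ t in Set.Ioc 0 τ, (‖u (σ n t) - g (σ n t)‖ + δ + ‖u t - g t‖) =
      (∫ t in Set.Ioc 0 τ, ‖u (σ n t) - g (σ n t)‖) + τ * δ
        + ∫ t in Set.Ioc 0 τ, ‖u t - g t‖ := by
    rw [integral_add hi12 hi3, integral_add hi1 hi2]
    simp [hτ.le]
  have hnn : 0 ≤ ∫ t in Set.Ioc 0 τ, ‖u (σ n t) - u t‖ :=
    integral_nonneg fun t => norm_nonneg _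
  rw [Real.dist_eq, sub_zero, abs_of_nonneg hnn]
  rw [hsplit] at hmain
  linarith
end

section
/- Let u ∈ L¹(ℝ,ℝ^m) be essentially bounded, let z ∈ L¹(ℝ,ℝ^m), and let σ_n : ℝ → ℝ be a sequence of diffeomorphisms such that (i) both σ_n and σ_n^{-1} converge locally uniformly to the identity, and (ii) the sequence of derivatives (d/dt)σ_n^{-1} converges locally uniformly to the constant function 1. Then for every τ > 0, lim_{n→∞} ∫_0^τ |u(σ_n(t)) − u(t)| · |z(t)| dt = 0. -/
open MeasureTheory Filter

/-!
The heart of the matter is that `u ∘ σ_n → u` in `L¹(0, τ)`. Approximate `u` in `L¹(ℝ)` by a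
continuous compactly supported `g`. The change of variables `s = σ_n(t)` has density `|(σ_n⁻¹)'|`,
which is at most `2` on `[-1, τ + 1] ⊇ σ_n((0, τ])` for large `n`; hence
`∫_0^τ |(u - g) ∘ σ_n| ≤ 2 ‖u - g‖₁`, while `g ∘ σ_n → g` uniformly on `(0, τ]` because `g` is
uniformly continuous. This is `tendsto_lintegral_comp_sub`.

The weight `|z|` is only integrable, so this convergence is not applied to the weighted integral
directly: along a subsequence `u ∘ σ_n → u` almost everywhere, and there dominated convergence
applies with dominating function `2 C |z|`, where `C` is an essential bound of `u`. Since every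
subsequence has a further subsequence along which the integrals tend to `0`, the whole sequence
does.
-/

/-- A bijection of `ℝ` with differentiable inverse pulls null sets back to null sets: `f ⁻¹' N` is
the image of `N` under the inverse. -/
theorem quasiMeasurePreserving_of_inverse {f g : ℝ → ℝ} (hf : Continuous f)
    (hg : Differentiable ℝ g) (hl : Function.LeftInverse g f) (hr : Function.RightInverse g f) :
    Measure.QuasiMeasurePreserving f volume volume := by
  refine ⟨hf.measurable, Measure.AbsolutelyContinuous.mk fun N hN h0 => ?_⟩
  rw [Measure.map_apply hf.measurable hN, ← Set.image_eq_preimage_of_inverse hr hl]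
  exact addHaar_image_eq_zero_of_differentiableOn_of_addHaar_eq_zero volume
    hg.differentiableOn h0

/-- Change of variables along `f = g⁻¹`: if the density `|g'|` is at most `2` on `f '' A`, then
composition with `f` at most doubles the integral. -/
theorem setLIntegral_comp_le_two_mul {f g : ℝ → ℝ} (hg : ContDiff ℝ 1 g)
    (hl : Function.LeftInverse g f) (hr : Function.RightInverse g f) {A : Set ℝ}
    (hA : MeasurableSet A) (hd : ∀ t ∈ A, |deriv g (f t)| ≤ 2) (w : ℝ → ENNReal) :
    ∫⁻ t in A, w (f t) ≤ 2 * ∫⁻ t, w t := by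
  have hs : f '' A = g ⁻¹' A := by rw [Set.image_eq_preimage_of_inverse hl hr]
  have hms : MeasurableSet (f '' A) := hs ▸ hg.continuous.measurable hA
  have himg : g '' (f '' A) = A := by rw [← Set.image_comp, hl.comp_eq_id, Set.image_id]
  have key := lintegral_image_eq_lintegral_abs_deriv_mul hms
    (fun x _ => ((hg.differentiable one_ne_zero) x).hasDerivAt.hasDerivWithinAt)
    (hr.injective.injOn) (fun t => w (f t))
  rw [himg] at key
  rw [key]
  calc ∫⁻ x in f '' A, ENNReal.ofReal |deriv g x| * w (f (g x))
      ≤ ∫⁻ x in f '' A, 2 * w x := by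
        refine setLIntegral_mono' hms fun x hx => ?_
        rw [hr x]
        obtain ⟨t, ht, rfl⟩ := hx
        gcongr
        exact ENNReal.ofReal_le_of_le_toReal (by simpa using hd t ht)
    _ ≤ ∫⁻ x, 2 * w x := setLIntegral_le_lintegral _ _
    _ = 2 * ∫⁻ x, w x := lintegral_const_mul' _ _ (by simp)

/-- Reparametrisation is continuous in `L¹` on bounded intervals. -/
theorem tendsto_lintegral_comp_sub {m : ℕ} {u : ℝ → (Fin m → ℝ)} (hu : Integrable u volume)
    {σ σinv : ℕ → ℝ → ℝ}
    (hσdiff : ∀ n, ContDiff ℝ 1 (σ n)) (hσinvdiff : ∀ n, ContDiff ℝ 1 (σinv n))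
    (hleft : ∀ n, Function.LeftInverse (σinv n) (σ n))
    (hright : ∀ n, Function.RightInverse (σinv n) (σ n))
    (hσ : TendstoLocallyUniformly (fun n => σ n) id atTop)
    (hderiv : TendstoLocallyUniformly (fun n t => deriv (σinv n) t) (fun _ => 1) atTop)
    (τ : ℝ) :
    Tendsto (fun n => ∫⁻ t in Set.Ioc (0 : ℝ) τ, ‖u (σ n t) - u t‖ₑ) atTop (nhds 0) := by
  have hσu : TendstoUniformlyOn (fun n => σ n) id atTop (Set.Icc 0 τ) :=
    (tendstoLocallyUniformlyOn_iff_tendstoUniformlyOn_of_compact isCompact_Icc).1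
      hσ.tendstoLocallyUniformlyOn
  have hdu : TendstoUniformlyOn (fun n t => deriv (σinv n) t) (fun _ => 1) atTop
      (Set.Icc (-1) (τ + 1)) :=
    (tendstoLocallyUniformlyOn_iff_tendstoUniformlyOn_of_compact isCompact_Icc).1
      hderiv.tendstoLocallyUniformlyOn
  rw [Metric.tendstoUniformlyOn_iff] at hσu hdu
  -- It suffices to bound the integral eventually by `(3 + τ) * δ` for every `δ > 0`.
  suffices H : ∀ δ : ENNReal, δ ≠ 0 → δ ≠ ⊤ → ∀ᶠ n in atTop,
      ∫⁻ t in Set.Ioc (0 : ℝ) τ, ‖u (σ n t) - u t‖ₑ ≤ (3 + ENNReal.ofReal τ) * δ by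
    rw [ENNReal.tendsto_nhds_zero]
    intro ε hε
    rcases eq_or_ne ε ⊤ with rfl | hεt
    · simp
    have h3 : (3 + ENNReal.ofReal τ) ≠ 0 := by simp
    have h3t : (3 + ENNReal.ofReal τ) ≠ ⊤ := by simp
    filter_upwards [H (ε / (3 + ENNReal.ofReal τ)) (ENNReal.div_pos hε.ne' h3t).ne'
      (ENNReal.div_lt_top hεt h3).ne] with n hn
    rwa [ENNReal.mul_div_cancel h3 h3t] at hn
  intro δ hδ hδt
  obtain ⟨g, hgc, hgu, hgcont, -⟩ := hu.exists_hasCompactSupport_lintegral_sub_le hδ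
  have hguc : UniformContinuous g := hgc.uniformContinuous_of_continuous hgcont
  obtain ⟨η, hη, hgη⟩ := Metric.uniformContinuous_iff.1 hguc δ.toReal
    (ENNReal.toReal_pos hδ hδt)
  filter_upwards [hσu η hη, hσu 1 one_pos, hdu 1 one_pos] with n h1 h2 h3
  have e1 : ∫⁻ t in Set.Ioc (0 : ℝ) τ, ‖u (σ n t) - g (σ n t)‖ₑ ≤ 2 * δ := by
    refine (setLIntegral_comp_le_two_mul (hσinvdiff n) (hleft n) (hright n) measurableSet_Ioc
      (fun t ht => ?_) (fun t => ‖u t - g t‖ₑ)).trans (by gcongr)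
    have h2t := h2 t (Set.Ioc_subset_Icc_self ht)
    rw [id, Real.dist_eq, abs_lt] at h2t
    have h3t := h3 (σ n t) ⟨by linarith [ht.1], by linarith [ht.2]⟩
    rw [Real.dist_eq, abs_lt] at h3t
    rw [abs_le]
    constructor <;> linarith
  have e2 : ∫⁻ t in Set.Ioc (0 : ℝ) τ, ‖g (σ n t) - g t‖ₑ ≤ ENNReal.ofReal τ * δ := by
    calc ∫⁻ t in Set.Ioc (0 : ℝ) τ, ‖g (σ n t) - g t‖ₑ
        ≤ ∫⁻ t in Set.Ioc (0 : ℝ) τ, δ := by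
          refine setLIntegral_mono' measurableSet_Ioc fun t ht => ?_
          have := hgη (h1 t (Set.Ioc_subset_Icc_self ht))
          rw [id, dist_comm, dist_eq_norm] at this
          rw [← ofReal_norm]
          exact ENNReal.ofReal_le_of_le_toReal this.le
      _ = ENNReal.ofReal τ * δ := by simp [mul_comm]
  have e3 : ∫⁻ t in Set.Ioc (0 : ℝ) τ, ‖g t - u t‖ₑ ≤ δ := by
    simp_rw [enorm_sub_rev (g _)]
    exact (setLIntegral_le_lintegral _ _).trans hgu
  have m2 : AEMeasurable (fun t => ‖g (σ n t) - g t‖ₑ) (volume.restrict (Set.Ioc (0 : ℝ) τ)) :=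
    ((hgcont.comp (hσdiff n).continuous).sub hgcont).aestronglyMeasurable.enorm
  have m3 : AEMeasurable (fun t => ‖g t - u t‖ₑ) (volume.restrict (Set.Ioc (0 : ℝ) τ)) :=
    (hgcont.aestronglyMeasurable.sub hu.aestronglyMeasurable.restrict).enorm
  calc ∫⁻ t in Set.Ioc (0 : ℝ) τ, ‖u (σ n t) - u t‖ₑ
      ≤ ∫⁻ t in Set.Ioc (0 : ℝ) τ,
          (‖u (σ n t) - g (σ n t)‖ₑ + ‖g (σ n t) - g t‖ₑ + ‖g t - u t‖ₑ) := by
        refine lintegral_mono fun t => ?_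
        have : u (σ n t) - u t
            = (u (σ n t) - g (σ n t)) + (g (σ n t) - g t) + (g t - u t) := by abel
        rw [this]
        exact (enorm_add_le _ _).trans (by gcongr; exact enorm_add_le _ _)
    _ = (∫⁻ t in Set.Ioc (0 : ℝ) τ, ‖u (σ n t) - g (σ n t)‖ₑ)
          + (∫⁻ t in Set.Ioc (0 : ℝ) τ, ‖g (σ n t) - g t‖ₑ)
          + ∫⁻ t in Set.Ioc (0 : ℝ) τ, ‖g t - u t‖ₑ := by
        rw [lintegral_add_right' _ m3, lintegral_add_right' _ m2]
    _ ≤ 2 * δ + ENNReal.ofReal τ * δ + δ := by gcongr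
    _ = (3 + ENNReal.ofReal τ) * δ := by ring

/-- Let `u ∈ L¹(ℝ,ℝ^m)` be essentially bounded, let `z ∈ L¹(ℝ,ℝ^m)`, and let
`σ_n : ℝ → ℝ` be a sequence of diffeomorphisms such that `σ_n` and `σ_n⁻¹` converge
locally uniformly to the identity and the derivatives `(σ_n⁻¹)'` converge locally
uniformly to `1`. Then for every `τ > 0`,
`∫_0^τ |u(σ_n(t)) − u(t)|·|z(t)| dt → 0`. -/
theorem integral_comp_reparam_sub_mul_tendsto_zero
    (m : ℕ) (u : ℝ → (Fin m → ℝ)) (hu : Integrable u (volume : Measure ℝ))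
    (hubd : ∃ C : ℝ, ∀ᵐ t : ℝ, ‖u t‖ ≤ C)
    (z : ℝ → (Fin m → ℝ)) (hz : Integrable z (volume : Measure ℝ))
    (σ σinv : ℕ → ℝ → ℝ)
    (hσdiff : ∀ n, ContDiff ℝ 1 (σ n)) (hσinvdiff : ∀ n, ContDiff ℝ 1 (σinv n))
    (hleft : ∀ n, Function.LeftInverse (σinv n) (σ n))
    (hright : ∀ n, Function.RightInverse (σinv n) (σ n))
    (hσ : TendstoLocallyUniformly (fun n => σ n) id atTop)
    (hσinv : TendstoLocallyUniformly (fun n => σinv n) id atTop)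
    (hderiv : TendstoLocallyUniformly (fun n t => deriv (σinv n) t) (fun _ => 1) atTop) :
    ∀ τ : ℝ, 0 < τ →
      Tendsto (fun n => ∫ t in Set.Ioc (0 : ℝ) τ, ‖u (σ n t) - u t‖ * ‖z t‖) atTop
        (nhds 0) := by
  intro τ _
  obtain ⟨C, hC⟩ := hubd
  have hq n := quasiMeasurePreserving_of_inverse (hσdiff n).continuous
    ((hσinvdiff n).differentiable one_ne_zero) (hleft n) (hright n)
  have hmeas n : AEStronglyMeasurable (fun t => u (σ n t)) (volume : Measure ℝ) :=
    hu.aestronglyMeasurable.comp_quasiMeasurePreserving (hq n)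
  have hL1 := tendsto_lintegral_comp_sub hu hσdiff hσinvdiff hleft hright hσ hderiv τ
  have hTM : TendstoInMeasure (volume.restrict (Set.Ioc (0 : ℝ) τ)) (fun n t => u (σ n t))
      atTop u := by
    refine tendstoInMeasure_of_tendsto_eLpNorm one_ne_zero (fun n => (hmeas n).restrict)
      hu.aestronglyMeasurable.restrict ?_
    simpa only [eLpNorm_one_eq_lintegral_enorm, Pi.sub_apply] using hL1
  refine tendsto_of_subseq_tendsto fun ns hns => ?_
  obtain ⟨ms, hms, hae⟩ := (hTM.comp hns).exists_seq_tendsto_ae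
  refine ⟨ms, ?_⟩
  have hlim : Tendsto (fun k => ∫ t in Set.Ioc (0 : ℝ) τ,
      ‖u (σ (ns (ms k)) t) - u t‖ * ‖z t‖) atTop
      (nhds (∫ t in Set.Ioc (0 : ℝ) τ, (0 : ℝ))) := by
    refine tendsto_integral_of_dominated_convergence (fun t => (C + C) * ‖z t‖) (fun k => ?_)
      (hz.norm.const_mul _).restrict (fun k => ?_) ?_
    · exact (((hmeas _).sub hu.aestronglyMeasurable).norm.mul hz.aestronglyMeasurable.norm).restrict
    · refine ae_restrict_of_ae ?_
      filter_upwards [hC, (hq (ns (ms k))).ae hC] with t h1 h2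
      rw [Real.norm_of_nonneg (by positivity)]
      gcongr
      exact (norm_sub_le _ _).trans (add_le_add h2 h1)
    · filter_upwards [hae] with t ht
      have h0 := (tendsto_iff_norm_sub_tendsto_zero.1 ht).mul_const ‖z t‖
      simpa using h0
  simpa using hlim
end

section
/- Let U ⊂ ℝ^m be compact and 𝒰 = {u : ℝ → ℝ^m : u measurable with u(t) ∈ U for a.e. t} ⊂ L^∞(ℝ,ℝ^m). For an element u ∈ L^∞(ℝ,ℝ^m), u lies in the interior of 𝒰 with respect to the L^∞-norm topology if and only if there exists a compact set K ⊂ int U with u(t) ∈ K for almost all t ∈ ℝ. -/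
open MeasureTheory

/-!
If the ball of radius `ε` around `u` lies in `𝒰`, then for each constant vector `c` with `‖c‖ < ε`
the translate `u + c` takes values in `U` almost everywhere. Letting `c` range over a countable
dense set and using that `U` is closed, almost every `u t` lies in the set
`K = {x | ∀ c ∈ ball 0 ε, x + c ∈ U}`, which is compact and contained in `int U`.

Conversely, a compact `K ⊆ int U` has a `δ`-thickening inside `int U`, and any `v` with
`‖v - u‖ < δ` takes values in this thickening almost everywhere.
-/

/-- Characterization of the interior of `𝒰 = {u ∈ L^∞(ℝ,ℝ^m) : u(t) ∈ U a.e.}` in the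
`L^∞`-norm topology: `u` lies in the interior of `𝒰` iff there is a compact set
`K ⊆ int U` with `u(t) ∈ K` for almost all `t`. -/
theorem mem_interior_controlFunctions_iff
    (m : ℕ) (U : Set (Fin m → ℝ)) (hUcomp : IsCompact U)
    (u : Lp (Fin m → ℝ) ⊤ (volume : Measure ℝ)) :
    u ∈ interior {v : Lp (Fin m → ℝ) ⊤ (volume : Measure ℝ) | ∀ᵐ t : ℝ, v t ∈ U} ↔
      ∃ K : Set (Fin m → ℝ), IsCompact K ∧ K ⊆ interior U ∧ ∀ᵐ t : ℝ, u t ∈ K := by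
  rw [mem_interior_iff_mem_nhds, Metric.mem_nhds_iff]
  constructor
  · rintro ⟨ε, hε, hball⟩
    have htrans : ∀ c ∈ Metric.ball (0 : Fin m → ℝ) ε, ∀ᵐ t : ℝ, u t + c ∈ U := by
      intro c hc
      have hmem : MemLp (fun _ : ℝ => c) ⊤ (volume : Measure ℝ) := memLp_top_const c
      have hnorm : ‖hmem.toLp‖ ≤ ‖c‖ := by
        rw [Lp.norm_toLp, eLpNorm_exponent_top]
        refine ENNReal.toReal_le_of_le_ofReal (norm_nonneg c) ?_
        exact eLpNormEssSup_le_of_ae_bound (Filter.Eventually.of_forall fun _ => le_rfl)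
      have hin : u + hmem.toLp ∈ Metric.ball u ε := by
        rw [mem_ball_iff_norm, add_sub_cancel_left]
        exact hnorm.trans_lt (mem_ball_zero_iff.mp hc)
      filter_upwards [hball hin, Lp.coeFn_add u hmem.toLp, hmem.coeFn_toLp] with t h1 h2 h3
      rwa [h2, Pi.add_apply, h3] at h1
    obtain ⟨D, hDc, hDd⟩ := TopologicalSpace.exists_countable_dense (Fin m → ℝ)
    have hclosed : IsClosed {x : Fin m → ℝ | ∀ c ∈ Metric.ball (0 : Fin m → ℝ) ε, x + c ∈ U} := by
      simp only [Set.ofPred_forall]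
      exact isClosed_iInter fun c => isClosed_iInter fun _ =>
        hUcomp.isClosed.preimage (continuous_add_const c)
    refine ⟨{x | ∀ c ∈ Metric.ball (0 : Fin m → ℝ) ε, x + c ∈ U},
      hUcomp.of_isClosed_subset hclosed ?_, ?_, ?_⟩
    · intro x hx
      simpa using hx 0 (Metric.mem_ball_self hε)
    · intro x hx
      rw [mem_interior_iff_mem_nhds, Metric.mem_nhds_iff]
      refine ⟨ε, hε, fun y hy => ?_⟩
      simpa using hx (y - x) (mem_ball_zero_iff.2 (mem_ball_iff_norm.1 hy))
    · have hall : ∀ᵐ t : ℝ, ∀ c ∈ Metric.ball (0 : Fin m → ℝ) ε ∩ D, u t + c ∈ U :=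
        (ae_ball_iff (hDc.mono Set.inter_subset_right)).2 fun c hc => htrans c hc.1
      filter_upwards [hall] with t ht c hc
      exact closure_minimal ht (hUcomp.isClosed.preimage (continuous_const_add (u t)))
        (hDd.open_subset_closure_inter Metric.isOpen_ball hc)
  · rintro ⟨K, hK, hKU, hu⟩
    obtain ⟨δ, hδ, hthick⟩ := hK.exists_thickening_subset_open isOpen_interior hKU
    refine ⟨δ, hδ, fun v hv => ?_⟩
    have hbound : ∀ᵐ t : ℝ, ‖(v - u : Lp (Fin m → ℝ) ⊤ (volume : Measure ℝ)) t‖ ≤ ‖v - u‖ := by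
      filter_upwards [ae_le_eLpNormEssSup
        (f := (v - u : Lp (Fin m → ℝ) ⊤ (volume : Measure ℝ)))] with t ht
      rw [← eLpNorm_exponent_top] at ht
      rw [Lp.norm_def, ← toReal_enorm]
      exact ENNReal.toReal_mono (Lp.eLpNorm_ne_top _) ht
    filter_upwards [hu, hbound, Lp.coeFn_sub v u] with t h1 h2 h3
    refine interior_subset (hthick (Metric.mem_thickening_iff.2 ⟨u t, h1, ?_⟩))
    rw [dist_eq_norm, ← Pi.sub_apply, ← h3]
    exact h2.trans_lt (mem_ball_iff_norm.mp hv)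
end

section
/- Let a : ℝ × 𝒰 → ℝ be a continuous additive cocycle over the shift flow θ, i.e., a(t+s,u) = a(t,u) + a(s,θ_t u) for all t,s ∈ ℝ and u ∈ 𝒰. Call u ∈ 𝒰 periodic if θ_τ u = u for some τ > 0; for periodic u the limit lim_{t→∞}(1/t)·a(t,u) exists. Then the infimum of the Lyapunov spectrum Λ_Ly(a) equals the infimum over all periodic u ∈ 𝒰 of lim_{t→∞}(1/t)·a(t,u). -/
/-!
Periodic controls form a subset of all controls, so it suffices to approximate an arbitrary
Lyapunov exponent `L = lim a(t,u)/t` from above by exponents of periodic controls. For large `n`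
let `v` be the `n`-periodic extension of `u` restricted to `[0, n)`. Its exponent is `a(n,v)/n`
(`tendsto_cocycle_div_of_periodic`), and by the cocycle identity `a(n,·)` is the sum of
`a(1, θ_k ·)` over `k < n`. The controls `θ_k u` and `θ_k v` agree on `(-N, N)` for all but `2N`
values of `k`, so `|a(n,u) - a(n,v)|` is at most `n ε + 4 N C`, where `C` bounds `a(1,·)` and `N`
is such that `a(1,·)` varies by at most `ε` between controls that agree on `(-N, N)`
(`exists_periodic_close`).

The existence of `C` and of `N` (`exists_locality`) rests on the weak* compactness of the set of
control functions (`isCompact_univ_weakStar`), which is proved with ultrafilters: limits exist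
weakly in `L²(μ)` for a finite measure `μ` equivalent to Lebesgue measure, they take values in the
convex compact set `U`, and the convergence extends to test functions in `L¹` by density.
-/

open MeasureTheory Filter

open scoped Topology

/-! ### Weak limits along ultrafilters -/

/-- Along an ultrafilter, a uniformly bounded family of functions converges weakly in `L²(μ)`,
by the Banach-Alaoglu theorem and the Riesz representation of the dual of `L²(μ)`. Only the
convergence of integrals over measurable sets is recorded. -/
theorem exists_ultrafilter_weak_limit {ι : Type*} (μ : Measure ℝ) [IsFiniteMeasure μ]
    (F : Ultrafilter ι) (f : ι → ℝ → ℝ) (M : ℝ)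
    (hmeas : ∀ j, AEStronglyMeasurable (f j) μ) (hb : ∀ j, ∀ᵐ t ∂μ, ‖f j t‖ ≤ M) :
    ∃ w : ℝ → ℝ, Measurable w ∧ Integrable w μ ∧
      ∀ A, MeasurableSet A →
        Tendsto (fun j => ∫ t in A, f j t ∂μ) F (𝓝 (∫ t in A, w t ∂μ)) := by
  have hmem : ∀ j, MemLp (f j) 2 μ := fun j => MemLp.of_bound (hmeas j) M (hb j)
  let g : ι → Lp ℝ 2 μ := fun j => (hmem j).toLp
  obtain ⟨R, hR⟩ : ∃ R : ℝ, ∀ j, ‖g j‖ ≤ R := by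
    refine ⟨_, fun j => Lp.norm_le_of_ae_bound (C := max M 0) (le_max_right _ _) ?_⟩
    filter_upwards [hb j, (hmem j).coeFn_toLp] with t ht h2
    rw [h2]; exact ht.trans (le_max_left _ _)
  let Φ : ι → WeakDual ℝ (Lp ℝ 2 μ) := fun j => StrongDual.toWeakDual (innerSL ℝ (g j))
  have hΦ : ∀ j, Φ j ∈ WeakDual.toStrongDual ⁻¹'
      Metric.closedBall (0 : StrongDual ℝ (Lp ℝ 2 μ)) R := by
    intro j
    simp only [Set.mem_preimage, mem_closedBall_zero_iff]
    exact (innerSL_apply_norm ℝ (g j)).trans_le (hR j)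
  obtain ⟨ℓ, -, hℓ⟩ := (isCompact_iff_ultrafilter_le_nhds'.1
    (WeakDual.isCompact_closedBall (0 : StrongDual ℝ (Lp ℝ 2 μ)) R)) (F.map Φ)
    (Filter.mem_map.2 (Filter.univ_mem' hΦ))
  let W : Lp ℝ 2 μ := (InnerProductSpace.toDual ℝ (Lp ℝ 2 μ)).symm (WeakDual.toStrongDual ℓ)
  have hlim : ∀ y : Lp ℝ 2 μ, Tendsto (fun j => inner ℝ (g j) y) F (𝓝 (inner ℝ W y)) := by
    intro y
    have h1 : Tendsto Φ F (𝓝 ℓ) := hℓ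
    have h2 := ((WeakDual.eval_continuous y).tendsto ℓ).comp h1
    have h3 : inner ℝ W y = ℓ y := InnerProductSpace.toDual_symm_apply
    rw [h3]
    exact h2
  refine ⟨W, (Lp.stronglyMeasurable W).measurable,
    (Lp.memLp W).integrable (by norm_num), fun A hA => ?_⟩
  have h := hlim (indicatorConstLp 2 hA (measure_ne_top μ A) 1)
  simp only [real_inner_comm, L2.inner_indicatorConstLp_one] at h
  refine h.congr fun j => setIntegral_congr_ae hA ?_
  filter_upwards [(hmem j).coeFn_toLp] with t ht _ using ht

/-- For uniformly bounded functions, convergence of the integrals over all measurable sets extends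
to convergence against all `y ∈ L¹(μ)`, since simple functions are dense in `L¹(μ)`. -/
theorem tendsto_integral_mul_of_tendsto_setIntegral {ι : Type*} (μ : Measure ℝ)
    [IsFiniteMeasure μ] (F : Filter ι) (f : ι → ℝ → ℝ) (w : ℝ → ℝ) (M : ℝ)
    (hmeas : ∀ j, AEStronglyMeasurable (f j) μ) (hb : ∀ j, ∀ᵐ t ∂μ, ‖f j t‖ ≤ M)
    (hw : AEStronglyMeasurable w μ) (hwb : ∀ᵐ t ∂μ, ‖w t‖ ≤ M)
    (hlim : ∀ A, MeasurableSet A →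
        Tendsto (fun j => ∫ t in A, f j t ∂μ) F (𝓝 (∫ t in A, w t ∂μ)))
    (y : ℝ → ℝ) (hy : Integrable y μ) :
    Tendsto (fun j => ∫ t, f j t * y t ∂μ) F (𝓝 (∫ t, w t * y t ∂μ)) := by
  have key : ∀ (h : ℝ → ℝ), AEStronglyMeasurable h μ → (∀ᵐ t ∂μ, ‖h t‖ ≤ M) →
      ∀ y z : Lp ℝ 1 μ, dist (∫ t, h t * y t ∂μ) (∫ t, h t * z t ∂μ) ≤ |M| * dist y z := by
    intro h hh hhb y z
    have iy := (L1.integrable_coeFn y).bdd_mul hh hhb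
    have iz := (L1.integrable_coeFn z).bdd_mul hh hhb
    rw [dist_eq_norm, ← integral_sub iy iz, dist_eq_norm, L1.norm_eq_integral_norm,
      ← integral_const_mul]
    refine norm_integral_le_of_norm_le ((L1.integrable_coeFn (y - z)).norm.const_mul _) ?_
    filter_upwards [hhb, Lp.coeFn_sub y z] with t ht hs
    rw [hs, Pi.sub_apply, ← mul_sub, norm_mul]
    exact mul_le_mul_of_nonneg_right (ht.trans (le_abs_self M)) (norm_nonneg _)
  refine Integrable.induction (P := fun y : ℝ → ℝ =>
    Tendsto (fun j => ∫ t, f j t * y t ∂μ) F (𝓝 (∫ t, w t * y t ∂μ))) ?_ ?_ ?_ ?_ hy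
  · intro c A hA hA'
    have e : ∀ h : ℝ → ℝ, ∫ t, h t * A.indicator (fun _ => c) t ∂μ = (∫ t in A, h t ∂μ) * c := by
      intro h
      rw [← integral_mul_const, ← integral_indicator hA]
      congr 1; ext t
      by_cases ht : t ∈ A <;> simp [ht]
    simp only [e]
    exact (hlim A hA).mul_const c
  · intro f₁ f₂ _ i₁ i₂ h₁ h₂
    have e : ∀ (h : ℝ → ℝ), AEStronglyMeasurable h μ → (∀ᵐ t ∂μ, ‖h t‖ ≤ M) →
      ∫ t, h t * (f₁ + f₂) t ∂μ = ∫ t, h t * f₁ t ∂μ + ∫ t, h t * f₂ t ∂μ := by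
      intro h hh hhb
      rw [← integral_add (i₁.bdd_mul hh hhb) (i₂.bdd_mul hh hhb)]
      simp [mul_add]
    rw [e w hw hwb]
    exact (h₁.add h₂).congr fun j => (e _ (hmeas j) (hb j)).symm
  · refine isClosed_of_closure_subset fun y hy => Metric.tendsto_nhds.2 fun ε hε => ?_
    have hM : 0 < 4 * (|M| + 1) := by positivity
    obtain ⟨z, hz, hyz⟩ := Metric.mem_closure_iff.1 hy (ε / (4 * (|M| + 1))) (by positivity)
    have hd : |M| * dist y z ≤ ε / 4 := by
      rw [lt_div_iff₀ hM] at hyz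
      nlinarith [dist_nonneg (x := y) (y := z), abs_nonneg M]
    filter_upwards [Metric.tendsto_nhds.1 hz (ε / 4) (by positivity)] with j hj
    have h1 := key _ (hmeas j) (hb j) y z
    have h2 := key _ hw hwb y z
    rw [dist_comm] at h2
    have := dist_triangle4 (∫ t, f j t * y t ∂μ) (∫ t, f j t * z t ∂μ) (∫ t, w t * z t ∂μ)
      (∫ t, w t * y t ∂μ)
    linarith
  · intro f₁ f₂ hae _ h
    have e : ∀ h : ℝ → ℝ, ∫ t, h t * f₁ t ∂μ = ∫ t, h t * f₂ t ∂μ := fun h =>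
      integral_congr_ae (by filter_upwards [hae] with t ht; rw [ht])
    simpa only [e] using h

/-- A weak limit of functions with values in the compact convex set `U` has values in `U`. If the
limit `w` took values in a closed ball disjoint from `U` on a set `A` of positive measure, its
average over `A` would lie in that ball and, being a limit of averages of the `f j`, also in `U`. -/
theorem ae_mem_of_tendsto_setIntegral {ι : Type*} {m : ℕ} {U : Set (Fin m → ℝ)}
    (hUc : IsCompact U) (hUconv : Convex ℝ U) (μ : Measure ℝ)
    [IsFiniteMeasure μ] (F : Filter ι) [F.NeBot] (f : ι → ℝ → Fin m → ℝ) (w : ℝ → Fin m → ℝ)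
    (hmeas : ∀ j, AEStronglyMeasurable (f j) μ) (hb : ∀ j, ∀ᵐ t ∂μ, f j t ∈ U)
    (hwm : Measurable w) (hwi : Integrable w μ)
    (hlim : ∀ i, ∀ A, MeasurableSet A →
        Tendsto (fun j => ∫ t in A, f j t i ∂μ) F (𝓝 (∫ t in A, w t i ∂μ))) :
    ∀ᵐ t ∂μ, w t ∈ U := by
  obtain ⟨M, hM⟩ := hUc.isBounded.exists_norm_le
  have hfi : ∀ j, Integrable (f j) μ := fun j =>
    Integrable.of_bound (hmeas j) M ((hb j).mono fun t ht => hM _ ht)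
  suffices h : (μ.map w) Uᶜ = 0 by
    rw [Measure.map_apply hwm hUc.measurableSet.compl] at h
    exact h
  refine measure_null_of_locally_null _ fun x hx => ?_
  obtain ⟨r, hr, hball⟩ := Metric.nhds_basis_closedBall.mem_iff.1
    (hUc.isClosed.isOpen_compl.mem_nhds hx)
  refine ⟨Metric.closedBall x r, mem_nhdsWithin_of_mem_nhds (Metric.closedBall_mem_nhds x hr), ?_⟩
  rw [Measure.map_apply hwm Metric.isClosed_closedBall.measurableSet]
  by_contra h0
  set A := w ⁻¹' Metric.closedBall x r with hAdef
  have hA : MeasurableSet A := hwm Metric.isClosed_closedBall.measurableSet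
  have h1 : (⨍ t in A, w t ∂μ) ∈ Metric.closedBall x r :=
    (convex_closedBall x r).set_average_mem Metric.isClosed_closedBall h0 (measure_ne_top _ _)
      (ae_restrict_of_forall_mem hA fun t ht => ht) hwi.integrableOn
  have h2 : ∀ j, (⨍ t in A, f j t ∂μ) ∈ U := fun j =>
    hUconv.set_average_mem hUc.isClosed h0 (measure_ne_top _ _)
      (ae_restrict_of_ae (hb j)) (hfi j).integrableOn
  have h3 : Tendsto (fun j => ⨍ t in A, f j t ∂μ) F (𝓝 (⨍ t in A, w t ∂μ)) := by
    simp only [setAverage_eq]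
    refine Tendsto.const_smul ?_ _
    rw [tendsto_pi_nhds]
    intro i
    have e : ∀ h : ℝ → Fin m → ℝ, Integrable h μ → (∫ t in A, h t ∂μ) i = ∫ t in A, h t i ∂μ :=
      fun h hh => eval_integral (fun i => (hh.eval i).integrableOn) i
    rw [e w hwi]
    exact (hlim i A hA).congr fun j => (e _ (hfi j)).symm
  exact hball h1 (hUc.isClosed.mem_of_tendsto h3 (Eventually.of_forall h2))

/-! ### Weak* compactness and locality of continuous functions -/

/-- The pairing of a control function with `x ∈ L¹(ℝ,ℝ^m)` that defines `weakStarTopology`. -/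
noncomputable def controlPairing {m : ℕ} {U : Set (Fin m → ℝ)} (u : controlFunctions m U)
    (x : Lp (Fin m → ℝ) 1 (volume : Measure ℝ)) : ℝ :=
  ∫ t : ℝ, ∑ i, (u : ℝ →ₘ[(volume : Measure ℝ)] (Fin m → ℝ)) t i * x t i

theorem tendsto_weakStar {ι : Type*} {m : ℕ} {U : Set (Fin m → ℝ)} {F : Filter ι}
    {g : ι → controlFunctions m U} {w : controlFunctions m U} :
    Tendsto g F (@nhds _ (weakStarTopology m U) w) ↔
      ∀ x, Tendsto (fun j => controlPairing (g j) x) F (𝓝 (controlPairing w x)) := by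
  rw [weakStarTopology, nhds_induced, tendsto_comap_iff, tendsto_pi_nhds]
  rfl

theorem integrable_control_mul {m : ℕ} {U : Set (Fin m → ℝ)} (hU : IsCompact U)
    (u : controlFunctions m U) (x : Lp (Fin m → ℝ) 1 (volume : Measure ℝ)) (i : Fin m) :
    Integrable (fun t => (u : ℝ →ₘ[(volume : Measure ℝ)] (Fin m → ℝ)) t i * x t i) := by
  obtain ⟨M, hM⟩ := hU.isBounded.exists_norm_le
  refine ((L1.integrable_coeFn x).eval i).bdd_mul (c := M) ?_ ?_
  · exact ((continuous_apply i).comp_aestronglyMeasurable u.1.aestronglyMeasurable)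
  · filter_upwards [u.2] with t ht using (norm_le_pi_norm _ i).trans (hM _ ht)

/-- The space of control functions is weak* compact. Weak limits are taken in `L²(μ)` for a finite
measure `μ` equivalent to Lebesgue measure, and transferred to the pairing with `L¹(ℝ,ℝ^m)`
through the density of Lebesgue measure with respect to `μ`. -/
theorem isCompact_univ_weakStar {m : ℕ} {U : Set (Fin m → ℝ)} (hU : IsCompact U)
    (hUconv : Convex ℝ U) :
    @IsCompact (controlFunctions m U) (weakStarTopology m U) Set.univ := by
  let _ := weakStarTopology m U
  obtain ⟨M, hM⟩ := hU.isBounded.exists_norm_le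
  rw [isCompact_iff_ultrafilter_le_nhds']
  intro F _
  let μ : Measure ℝ := (volume : Measure ℝ).toFinite
  have hμv : μ ≪ volume := toFinite_absolutelyContinuous _
  have hvμ : volume ≪ μ := absolutelyContinuous_toFinite _
  have hmeas : ∀ u : controlFunctions m U, AEStronglyMeasurable (fun t => u.1 t) μ :=
    fun u => u.1.aestronglyMeasurable.mono_ac hμv
  have hmeasi : ∀ (i : Fin m) (u : controlFunctions m U),
      AEStronglyMeasurable (fun t => u.1 t i) μ :=
    fun i u => (continuous_apply i).comp_aestronglyMeasurable (hmeas u)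
  have hmem : ∀ u : controlFunctions m U, ∀ᵐ t ∂μ, u.1 t ∈ U := fun u => hμv.ae_le u.2
  have hbi : ∀ (i : Fin m) (u : controlFunctions m U), ∀ᵐ t ∂μ, ‖u.1 t i‖ ≤ M :=
    fun i u => (hmem u).mono fun t ht => (norm_le_pi_norm _ i).trans (hM _ ht)
  choose w hwm hwi hwlim using fun i : Fin m =>
    exists_ultrafilter_weak_limit μ F (fun u t => u.1 t i) M (hmeasi i) (hbi i)
  let W : ℝ → Fin m → ℝ := fun t i => w i t
  have hWm : Measurable W := measurable_pi_lambda _ hwm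
  have hWU : ∀ᵐ t ∂μ, W t ∈ U :=
    ae_mem_of_tendsto_setIntegral hU hUconv μ F (fun (u : controlFunctions m U) t => u.1 t) W hmeas hmem hWm
      (Integrable.of_eval hwi) hwlim
  have hWae := AEEqFun.coeFn_mk W (μ := (volume : Measure ℝ)) hWm.aestronglyMeasurable
  let v : controlFunctions m U := ⟨AEEqFun.mk W hWm.aestronglyMeasurable, by
    filter_upwards [hWae, hvμ.ae_le hWU] with t h1 h2
    rw [h1]; exact h2⟩
  refine ⟨v, Set.mem_univ _, ?_⟩
  have : Tendsto id (F : Filter (controlFunctions m U)) (𝓝 v) := by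
    refine tendsto_weakStar.2 fun x => ?_
    have e : ∀ u : controlFunctions m U, controlPairing u x = ∑ i, ∫ t, u.1 t i * x t i :=
      fun u => integral_finsetSum _ fun i _ => integrable_control_mul hU u x i
    simp only [e]
    refine tendsto_finsetSum _ fun i _ => ?_
    let ρ : ℝ → ℝ := fun t => ((volume : Measure ℝ).rnDeriv μ t).toReal
    have e2 : ∀ h : ℝ → ℝ, ∫ t, h t * x t i = ∫ t, h t * (ρ t * x t i) ∂μ := fun h => by
      rw [← integral_rnDeriv_smul hvμ]
      congr 1; ext t; simp only [ρ, smul_eq_mul]; ring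
    have hx : Integrable (fun t => ρ t * x t i) μ :=
      (integrable_rnDeriv_smul_iff hvμ).2 ((L1.integrable_coeFn x).eval i)
    have e3 : ∫ t, v.1 t i * x t i = ∫ t, w i t * x t i :=
      integral_congr_ae (by filter_upwards [hWae] with t ht; simp only [v, ht, W])
    rw [e3, e2]
    simp only [e2]
    exact tendsto_integral_mul_of_tendsto_setIntegral μ F
      (fun (u : controlFunctions m U) t => u.1 t i) (w i) M
      (hmeasi i) (hbi i) (hwm i).aestronglyMeasurable
      (hWU.mono fun t ht => (norm_le_pi_norm _ i).trans (hM _ ht)) (hwlim i) _ hx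
  exact this

/-- A weak* continuous function depends, up to `ε`, only on the restriction of the control to a
bounded interval. Otherwise there are `u n`, `v n` agreeing on `(-n, n)` with `f (u n)` and
`f (v n)` more than `ε` apart; by compactness `u` converges along an ultrafilter, and `v` then has
the same limit, contradicting the continuity of `f`. -/
theorem exists_locality {m : ℕ} {U : Set (Fin m → ℝ)} (hU : IsCompact U)
    (hUconv : Convex ℝ U) (f : controlFunctions m U → ℝ)
    (hf : @Continuous _ _ (weakStarTopology m U) _ f) (ε : ℝ) (hε : 0 < ε) :
    ∃ N : ℕ, ∀ u v : controlFunctions m U,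
      (∀ᵐ t : ℝ, t ∈ Set.Ioo (-N : ℝ) N → u.1 t = v.1 t) → |f u - f v| ≤ ε := by
  let _ := weakStarTopology m U
  obtain ⟨M, hM⟩ := hU.isBounded.exists_norm_le
  by_contra! hcon
  choose u v huv hfuv using hcon
  let G : Ultrafilter ℕ := hyperfilter ℕ
  have hG : (G : Filter ℕ) ≤ atTop := Nat.hyperfilter_le_atTop
  obtain ⟨w, -, hw⟩ := isCompact_iff_ultrafilter_le_nhds'.1 (isCompact_univ_weakStar hU hUconv)
    (G.map u) univ_mem
  have hu : Tendsto u G (𝓝 w) := hw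
  have hv : Tendsto v G (𝓝 w) := by
    refine tendsto_weakStar.2 fun x => ?_
    have h0 : Tendsto (fun n => controlPairing (v n) x - controlPairing (u n) x) G (𝓝 0) := by
      refine Tendsto.mono_left ?_ hG
      have e : ∀ n, controlPairing (v n) x - controlPairing (u n) x =
          ∫ t, ∑ i, ((v n).1 t i - (u n).1 t i) * x t i := fun n => by
        rw [controlPairing, controlPairing, ← integral_sub
          (integrable_finsetSum _ fun i _ => integrable_control_mul hU (v n) x i)
          (integrable_finsetSum _ fun i _ => integrable_control_mul hU (u n) x i)]
        simp only [← Finset.sum_sub_distrib, sub_mul]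
      simp only [e]
      rw [← integral_zero ℝ ℝ]
      refine tendsto_integral_of_dominated_convergence (fun t => ∑ i, 2 * M * |x t i|) ?_ ?_ ?_ ?_
      · intro n
        simp only [sub_mul]
        exact (integrable_finsetSum _ fun i _ => (integrable_control_mul hU (v n) x i).sub
          (integrable_control_mul hU (u n) x i)).aestronglyMeasurable
      · exact integrable_finsetSum _ fun i _ =>
          (((L1.integrable_coeFn x).eval i).abs.const_mul _)
      · intro n
        filter_upwards [(u n).2, (v n).2] with t h1 h2
        refine (norm_sum_le _ _).trans (Finset.sum_le_sum fun i _ => ?_)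
        rw [norm_mul, Real.norm_eq_abs (x t i)]
        refine mul_le_mul_of_nonneg_right ?_ (abs_nonneg _)
        refine (norm_sub_le _ _).trans ?_
        have h3 := (norm_le_pi_norm _ i).trans (hM _ h1)
        have h4 := (norm_le_pi_norm _ i).trans (hM _ h2)
        linarith
      · filter_upwards [ae_all_iff.2 huv] with t ht
        refine tendsto_const_nhds.congr' ?_
        obtain ⟨n₀, hn₀⟩ := exists_nat_gt |t|
        filter_upwards [eventually_ge_atTop n₀] with n hn
        have hlt : |t| < n := hn₀.trans_le (by exact_mod_cast hn)
        simp [ht n (abs_lt.1 hlt)]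
    simpa using h0.add (tendsto_weakStar.1 hu x)
  have h1 := ((hf.tendsto w).comp hu).sub ((hf.tendsto w).comp hv)
  rw [sub_self] at h1
  obtain ⟨n, hn⟩ := (Metric.tendsto_nhds.1 h1 ε hε).exists
  rw [Real.dist_eq, sub_zero] at hn
  exact (hfuv n).not_gt hn

/-! ### Periodic controls -/

/-- For a `τ`-periodic control, `a t u - t * (a τ u / τ)` is continuous and `τ`-periodic in `t`,
hence bounded. -/
theorem tendsto_cocycle_div_of_periodic {m : ℕ} {U : Set (Fin m → ℝ)}
    (a : ℝ → controlFunctions m U → ℝ)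
    (hacont : @Continuous (ℝ × controlFunctions m U) ℝ
      (@instTopologicalSpaceProd _ _ _ (weakStarTopology m U)) _
      (fun p => a p.1 p.2))
    (hacoc : ∀ (t s : ℝ) (u : controlFunctions m U),
      a (t + s) u = a t u + a s (shiftFlow t u))
    (u : controlFunctions m U) (τ : ℝ) (hτ : 0 < τ) (hu : shiftFlow τ u = u) :
    Tendsto (fun t : ℝ => a t u / t) atTop (𝓝 (a τ u / τ)) := by
  let _ := weakStarTopology m U
  have hcont : Continuous fun t => a t u - t * (a τ u / τ) :=
    (hacont.comp (continuous_id.prodMk continuous_const)).sub (continuous_id.mul continuous_const)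
  have hper : Function.Periodic (fun t => a t u - t * (a τ u / τ)) τ := by
    intro t
    simp only
    rw [add_comm t τ, hacoc τ t u, hu, add_mul, mul_div_cancel₀ _ hτ.ne']
    ring
  obtain ⟨C, hC⟩ := (hper.isBounded_of_continuous hτ.ne' hcont).exists_norm_le
  have h0 : Tendsto (fun t : ℝ => (a t u - t * (a τ u / τ)) / t) atTop (𝓝 0) := by
    refine squeeze_zero_norm' (a := fun t : ℝ => C / t) ?_
      (tendsto_const_nhds.div_atTop tendsto_id)
    filter_upwards [eventually_gt_atTop 0] with t ht
    rw [norm_div, Real.norm_of_nonneg ht.le]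
    exact div_le_div_of_nonneg_right (hC _ (Set.mem_range_self t)) ht.le
  have h1 := h0.add_const (a τ u / τ)
  rw [zero_add] at h1
  refine h1.congr' ?_
  filter_upwards [eventually_gt_atTop 0] with t ht
  field_simp
  ring

/-- The `n`-periodic extension of the restriction of `u` to `[0, n)`. -/
theorem exists_periodization {m : ℕ} {U : Set (Fin m → ℝ)} (hU : IsCompact U)
    (u : controlFunctions m U) (n : ℕ) (hn : 0 < n) :
    ∃ v : controlFunctions m U, shiftFlow (n : ℝ) v = v ∧
      ∀ᵐ t : ℝ, t ∈ Set.Ico (0 : ℝ) n → u.1 t = v.1 t := by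
  classical
  have hn' : (n : ℝ) ≠ 0 := by positivity
  have huU : ∀ᵐ t : ℝ, u.1 t ∈ U := u.2
  obtain ⟨t₀, ht₀⟩ := huU.exists
  have hum : Measurable (fun t => u.1 t) := u.1.measurable
  -- a representative of `u` with values in `U` everywhere
  let r : ℝ → Fin m → ℝ := fun t => if u.1 t ∈ U then u.1 t else u.1 t₀
  have hr : Measurable r := Measurable.ite (hum hU.measurableSet) hum measurable_const
  have hrU : ∀ t, r t ∈ U := fun t => by
    by_cases h : u.1 t ∈ U <;> simp [r, h, ht₀]
  let p : ℝ → Fin m → ℝ := fun t => r (n * Int.fract (t / n))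
  have hp : Measurable p := hr.comp ((measurable_fract.comp (measurable_id.div_const _)).const_mul _)
  have hpae := AEEqFun.coeFn_mk p (μ := (volume : Measure ℝ)) hp.aestronglyMeasurable
  refine ⟨⟨AEEqFun.mk p hp.aestronglyMeasurable, ?_⟩, ?_, ?_⟩
  · filter_upwards [hpae] with t ht
    rw [ht]; exact hrU _
  · refine Subtype.ext ?_
    simp only [shiftFlow]
    rw [AEEqFun.compMeasurePreserving_mk]
    congr 1
    ext1 t
    simp only [p, Function.comp, add_div, div_self hn', Int.fract_add_one]
  · filter_upwards [hpae, huU] with t ht htU htn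
    have h1 : Int.fract (t / n) = t / n :=
      Int.fract_eq_self.2 ⟨div_nonneg htn.1 (by positivity), (div_lt_one (by positivity)).2 htn.2⟩
    rw [ht]
    simp only [p, h1, mul_div_cancel₀ t hn', r, htU, if_true]

theorem shiftFlow_agree {m : ℕ} {U : Set (Fin m → ℝ)} (u v : controlFunctions m U) (n k N : ℕ)
    (h : ∀ᵐ t : ℝ, t ∈ Set.Ico (0 : ℝ) n → u.1 t = v.1 t) (h1 : N ≤ k) (h2 : k + N ≤ n) :
    ∀ᵐ t : ℝ, t ∈ Set.Ioo (-N : ℝ) N →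
      (shiftFlow (k : ℝ) u).1 t = (shiftFlow (k : ℝ) v).1 t := by
  have hs := measurePreserving_add_right (volume : Measure ℝ) (k : ℝ)
  have hk : ∀ᵐ t : ℝ, t + k ∈ Set.Ico (0 : ℝ) n → u.1 (t + k) = v.1 (t + k) :=
    hs.quasiMeasurePreserving.tendsto_ae.eventually h
  filter_upwards [hk, AEEqFun.coeFn_compMeasurePreserving u.1 hs,
    AEEqFun.coeFn_compMeasurePreserving v.1 hs] with t ht hut hvt htN
  have h1' : (N : ℝ) ≤ k := by exact_mod_cast h1
  have h2' : (k : ℝ) + N ≤ n := by exact_mod_cast h2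
  refine (hut.trans (ht ⟨?_, ?_⟩)).trans hvt.symm
  · linarith [htN.1]
  · linarith [htN.2]

theorem cocycle_nat_eq_sum {m : ℕ} {U : Set (Fin m → ℝ)} (a : ℝ → controlFunctions m U → ℝ)
    (hacoc : ∀ (t s : ℝ) (u : controlFunctions m U),
      a (t + s) u = a t u + a s (shiftFlow t u)) (u : controlFunctions m U) (n : ℕ) :
    a n u = a 0 u + ∑ k ∈ Finset.range n, a 1 (shiftFlow (k : ℝ) u) := by
  induction n with
  | zero => simp
  | succ n ih => rw [Finset.sum_range_succ, Nat.cast_succ, hacoc, ih, add_assoc]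

theorem cocycle_zero {m : ℕ} {U : Set (Fin m → ℝ)} (a : ℝ → controlFunctions m U → ℝ)
    (hacoc : ∀ (t s : ℝ) (u : controlFunctions m U),
      a (t + s) u = a t u + a s (shiftFlow t u)) (u : controlFunctions m U) : a 0 u = 0 := by
  have h0 : shiftFlow 0 u = u := by
    refine Subtype.ext ?_
    simp only [shiftFlow]
    refine AEEqFun.ext ?_
    filter_upwards [AEEqFun.coeFn_compMeasurePreserving u.1
      (measurePreserving_add_right (volume : Measure ℝ) 0)] with t ht
    rw [ht]; simp
  have := hacoc 0 0 u
  rw [h0, add_zero] at this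
  linarith

/-- Any Lyapunov exponent is approximated from above by the exponent `a n v / n` of an `n`-periodic
control `v`, namely the periodization of `u` for large `n`. -/
theorem exists_periodic_close {m : ℕ} {U : Set (Fin m → ℝ)} (hUcomp : IsCompact U)
    (hUconv : Convex ℝ U) (a : ℝ → controlFunctions m U → ℝ)
    (hacont : @Continuous (ℝ × controlFunctions m U) ℝ
      (@instTopologicalSpaceProd _ _ _ (weakStarTopology m U)) _
      (fun p => a p.1 p.2))
    (hacoc : ∀ (t s : ℝ) (u : controlFunctions m U),
      a (t + s) u = a t u + a s (shiftFlow t u))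
    (u : controlFunctions m U) (L : ℝ) (hL : Tendsto (fun t : ℝ => a t u / t) atTop (𝓝 L))
    (ε : ℝ) (hε : 0 < ε) :
    ∃ (v : controlFunctions m U) (n : ℕ), 0 < n ∧ shiftFlow (n : ℝ) v = v ∧
      a n v / n < L + ε := by
  let _ := weakStarTopology m U
  have hf : Continuous (a 1) := hacont.comp (continuous_const.prodMk continuous_id)
  obtain ⟨N, hN⟩ := exists_locality hUcomp hUconv (a 1) hf (ε / 3) (by positivity)
  obtain ⟨C, hC⟩ := ((isCompact_univ_weakStar hUcomp hUconv).image hf).isBounded.exists_norm_le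
  have hC' : ∀ w, |a 1 w| ≤ C := fun w => hC _ (Set.mem_image_of_mem _ (Set.mem_univ w))
  have hC0 : 0 ≤ C := (abs_nonneg _).trans (hC' u)
  have hLn : Tendsto (fun n : ℕ => a n u / n) atTop (𝓝 L) :=
    hL.comp tendsto_natCast_atTop_atTop
  have hCn : Tendsto (fun n : ℕ => (4 * N * C) / (n : ℝ)) atTop (𝓝 0) :=
    tendsto_const_nhds.div_atTop tendsto_natCast_atTop_atTop
  obtain ⟨n, hn1, hn2, hn0⟩ := ((hLn.eventually (gt_mem_nhds (show L < L + ε / 3 by linarith))).and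
    ((hCn.eventually (gt_mem_nhds (show 0 < ε / 3 by positivity))).and
      (eventually_gt_atTop 0))).exists
  obtain ⟨v, hv, huv⟩ := exists_periodization hUcomp u n hn0
  refine ⟨v, n, hn0, hv, ?_⟩
  have hn' : (0 : ℝ) < n := by exact_mod_cast hn0
  -- `θ_k u` and `θ_k v` agree on `(-N, N)` unless `k < N` or `n - N ≤ k`; the at most `2 * N`
  -- exceptional terms are bounded by `2 * C`.
  have hterm : ∀ k ∈ Finset.range n,
      a 1 (shiftFlow (k : ℝ) v) - a 1 (shiftFlow (k : ℝ) u) ≤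
        ε / 3 + ((if k < N then 2 * C else 0) + (if n - N ≤ k then 2 * C else 0)) := by
    intro k hk
    have h1 := abs_le.1 (hC' (shiftFlow (k : ℝ) v))
    have h2 := abs_le.1 (hC' (shiftFlow (k : ℝ) u))
    by_cases hkN : k < N
    · simp only [hkN, if_true]
      split_ifs <;> linarith
    by_cases hkn : n - N ≤ k
    · simp only [hkn, if_true]
      split_ifs; linarith
    · have := abs_le.1 (hN _ _ (shiftFlow_agree u v n k N huv (by omega) (by omega)))
      simp only [hkn, hkN, if_false]
      linarith
  have hsum := Finset.sum_le_sum hterm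
  have hcard1 : ((Finset.range n).filter (fun k => k < N)).card ≤ N := by
    refine (Finset.card_le_card (t := Finset.range N) ?_).trans_eq (Finset.card_range N)
    intro k hk
    simp_all
  have hcard2 : ((Finset.range n).filter (fun k => n - N ≤ k)).card ≤ N := by
    refine (Finset.card_le_card (t := Finset.Ico (n - N) n) ?_).trans ?_
    · intro k hk
      simp_all
    · rw [Nat.card_Ico]; omega
  have hcard1' : (((Finset.range n).filter (fun k => k < N)).card : ℝ) ≤ N := by
    exact_mod_cast hcard1
  have hcard2' : (((Finset.range n).filter (fun k => n - N ≤ k)).card : ℝ) ≤ N := by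
    exact_mod_cast hcard2
  rw [Finset.sum_sub_distrib, Finset.sum_add_distrib, Finset.sum_add_distrib,
    ← Finset.sum_filter, ← Finset.sum_filter] at hsum
  simp only [Finset.sum_const, Finset.card_range, nsmul_eq_mul] at hsum
  have hav := cocycle_nat_eq_sum a hacoc v n
  have hau := cocycle_nat_eq_sum a hacoc u n
  rw [cocycle_zero a hacoc, zero_add] at hav hau
  have hdiff : a n v ≤ a n u + n * (ε / 3) + 4 * N * C := by
    rw [hav, hau]
    nlinarith
  rw [div_lt_iff₀ hn'] at hn1 hn2 ⊢
  linarith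

/-- Let `a` be a continuous additive cocycle over the shift flow `θ` on `𝒰` (with the
weak* topology). For every periodic `u ∈ 𝒰` (i.e. `θ_τ u = u` for some `τ > 0`) the
limit `lim_{t→∞} (1/t)·a(t,u)` exists, and the infimum of the Lyapunov spectrum
`Λ_Ly(a)` equals the infimum of these limits over all periodic `u ∈ 𝒰`. -/
theorem inf_lyapunov_spectrum_eq_inf_over_periodic
    (m : ℕ) (U : Set (Fin m → ℝ)) (hUcomp : IsCompact U) (hUconv : Convex ℝ U)
    (a : ℝ → controlFunctions m U → ℝ)
    (hacont : @Continuous (ℝ × controlFunctions m U) ℝ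
      (@instTopologicalSpaceProd _ _ _ (weakStarTopology m U)) _
      (fun p => a p.1 p.2))
    (hacoc : ∀ (t s : ℝ) (u : controlFunctions m U),
      a (t + s) u = a t u + a s (shiftFlow t u)) :
    (∀ u : controlFunctions m U, (∃ τ : ℝ, 0 < τ ∧ shiftFlow τ u = u) →
      ∃ L : ℝ, Tendsto (fun t : ℝ => a t u / t) atTop (nhds L)) ∧
    sInf {L : ℝ | ∃ u : controlFunctions m U,
        Tendsto (fun t : ℝ => a t u / t) atTop (nhds L)} =
      sInf {L : ℝ | ∃ u : controlFunctions m U,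
        (∃ τ : ℝ, 0 < τ ∧ shiftFlow τ u = u) ∧
        Tendsto (fun t : ℝ => a t u / t) atTop (nhds L)} := by
  have hper := fun (u : controlFunctions m U) (τ : ℝ) (hτ : 0 < τ) (hu : shiftFlow τ u = u) =>
    tendsto_cocycle_div_of_periodic a hacont hacoc u τ hτ hu
  refine ⟨fun u ⟨τ, hτ, hu⟩ => ⟨_, hper u τ hτ hu⟩, ?_⟩
  set S := {L : ℝ | ∃ u : controlFunctions m U, Tendsto (fun t : ℝ => a t u / t) atTop (𝓝 L)}
  set P := {L : ℝ | ∃ u : controlFunctions m U, (∃ τ : ℝ, 0 < τ ∧ shiftFlow τ u = u) ∧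
    Tendsto (fun t : ℝ => a t u / t) atTop (𝓝 L)}
  have hPS : P ⊆ S := fun L ⟨u, _, h⟩ => ⟨u, h⟩
  have hclose : ∀ L ∈ S, ∀ ε > 0, ∃ L' ∈ P, L' < L + ε := by
    rintro L ⟨u, hL⟩ ε hε
    obtain ⟨v, n, hn, hv, hlt⟩ :=
      exists_periodic_close hUcomp hUconv a hacont hacoc u L hL ε hε
    have hn' : (0 : ℝ) < n := by exact_mod_cast hn
    exact ⟨_, ⟨v, ⟨n, hn', hv⟩, hper v n hn' hv⟩, hlt⟩
  rcases S.eq_empty_or_nonempty with hS | ⟨L₀, hL₀⟩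
  · rw [hS, Set.subset_eq_empty hPS hS]
  obtain ⟨L₁, hL₁, -⟩ := hclose L₀ hL₀ 1 one_pos
  by_cases hb : BddBelow P
  · have hlow : ∀ L ∈ S, sInf P ≤ L := fun L hL => le_of_forall_pos_le_add fun ε hε => by
      obtain ⟨L', hL', hlt⟩ := hclose L hL ε hε
      exact (csInf_le hb hL').trans hlt.le
    exact le_antisymm (csInf_le_csInf ⟨_, hlow⟩ ⟨L₁, hL₁⟩ hPS) (le_csInf ⟨L₀, hL₀⟩ hlow)
  · -- both infima take the junk value `0` here
    rw [Real.sInf_of_not_bddBelow hb, Real.sInf_of_not_bddBelow fun h => hb (h.mono hPS)]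
end
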